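/- arXiv:2009.12272 — 4 statements merged into one kernel-verified Lean document; each statement's English description precedes it below -/
import Mathlib

section
/- Let H : [0,1] → ℝ be Hölder continuous with 0 < H(x) < 1, set 𝔪 := min_{[0,1]} H + 1/2. Let p : ℝ → (0,∞) be an even C^∞ function with p(ξ) = |ξ| for |ξ| ≥ 2 and p(ξ) = 1 for |ξ| ≤ 1. Let 𝕋, 𝔸 : L²(ℝ;ℂ) → L²((0,1);ℂ) be bounded operators such that for every f and almost every x ∈ (0,1), (𝕋f)(x) = C_*(H(x)) · ∫_ℝ (e^{ixξ} − 1) · |ξ|^{−(H(x)+1/2)} · f(ξ) dξ and (𝔸f)(x) = C_*(H(x)) · ∫_ℝ e^{ixξ} · p(ξ)^{−(H(x)+1/2)} · f(ξ) dξ. Then 𝕋 − 𝔸 is compact and there exist μ > 0 and C > 0 such that 𝒩(t, 𝕋 − 𝔸) ≤ C · t^{1/𝔪 − μ} for all t > 1. -/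
open MeasureTheory Set Filter Metric
open scoped ENNReal NNReal Real

noncomputable section

/-- Approximation numbers (singular values) of a continuous linear map between
complex normed spaces: `s_k(A) = inf {‖A - F‖ : rank F ≤ k}`. -/
def sVal {E F : Type*} [NormedAddCommGroup E] [NormedAddCommGroup F]
    [NormedSpace ℂ E] [NormedSpace ℂ F] (A : E →L[ℂ] F) (k : ℕ) : ℝ :=
  sInf {c : ℝ | ∃ G : E →L[ℂ] F, LinearMap.rank (G : E →ₗ[ℂ] F) ≤ (k : Cardinal) ∧ c = ‖A - G‖}

/-- Counting function of singular values: `𝒩(t, A) = #{k : s_k(A) > 1/t}`. -/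
def sCount {E F : Type*} [NormedAddCommGroup E] [NormedAddCommGroup F]
    [NormedSpace ℂ E] [NormedSpace ℂ F] (A : E →L[ℂ] F) (t : ℝ) : ℕ :=
  Set.ncard {k : ℕ | 1 / t < sVal A k}

/-- `C_*(H) = (Γ(2H+1) sin(πH) / (2π))^{1/2}`. -/
def Cstar (H : ℝ) : ℝ :=
  Real.sqrt (Real.Gamma (2 * H + 1) * Real.sin (Real.pi * H) / (2 * Real.pi))

/-- Hölder continuity of exponent `r` on a set. -/
def HolderOn (f : ℝ → ℝ) (r : ℝ) (s : Set ℝ) : Prop :=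
  ∃ C : ℝ, ∀ x ∈ s, ∀ y ∈ s, |f x - f y| ≤ C * |x - y| ^ r


abbrev muI : Measure ℝ := volume.restrict (Ioo (0:ℝ) 1)

/-- Kernel `k` induces a compact operator of rank at most `n`. -/
def FR (n : ℕ) (k : ℝ → ℝ → ℂ) : Prop :=
  ∃ G : Lp ℂ 2 (volume : Measure ℝ) →L[ℂ] Lp ℂ 2 muI,
    LinearMap.rank (G : Lp ℂ 2 (volume : Measure ℝ) →ₗ[ℂ] Lp ℂ 2 muI) ≤ (n : Cardinal) ∧
    IsCompactOperator (⇑G) ∧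
    (∀ x ∈ Ioo (0:ℝ) 1, MemLp (k x) 2 (volume : Measure ℝ)) ∧
    ∀ f : Lp ℂ 2 (volume : Measure ℝ), ∀ᵐ x ∂muI, (G f : ℝ → ℂ) x = ∫ ξ, k x ξ * (f : ℝ → ℂ) ξ

lemma int_mul {g : ℝ → ℂ} (hg : MemLp g 2 (volume : Measure ℝ)) (f : Lp ℂ 2 (volume : Measure ℝ)) :
    Integrable (fun ξ => g ξ * (f : ℝ → ℂ) ξ) volume :=
  hg.integrable_mul (Lp.memLp f)

lemma FR_add {n m : ℕ} {k l : ℝ → ℝ → ℂ} (hk : FR n k) (hl : FR m l) :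
    FR (n + m) (fun x ξ => k x ξ + l x ξ) := by
  obtain ⟨G, r1, c1, m1, e1⟩ := hk
  obtain ⟨G', r2, c2, m2, e2⟩ := hl
  refine ⟨G + G', ?_, ?_, fun x hx => (m1 x hx).add (m2 x hx), fun f => ?_⟩
  · push_cast
    exact (LinearMap.rank_add_le _ _).trans (add_le_add r1 r2)
  · exact c1.add c2
  · filter_upwards [e1 f, e2 f, Lp.coeFn_add (G f) (G' f),
      ae_restrict_mem (measurableSet_Ioo)] with x h1 h2 h3 hx
    rw [add_apply, h3, Pi.add_apply, h1, h2, ← integral_add (int_mul (m1 x hx) f) (int_mul (m2 x hx) f)]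
    simp only [add_mul]

lemma FR_zero : FR 0 (fun _ _ => 0) := by
  refine ⟨0, ?_, ?_, fun x hx => MemLp.zero, fun f => ?_⟩
  · simp [LinearMap.rank_zero]
  · exact isCompactOperator_zero
  · filter_upwards [Lp.coeFn_zero ℂ 2 muI] with x hx
    have : ((0 : Lp ℂ 2 (volume : Measure ℝ) →L[ℂ] Lp ℂ 2 muI) f : ℝ → ℂ) x = 0 := hx
    rw [this]; simp

lemma FR_sum {n : ℕ} (N : ℕ) (k : ℕ → ℝ → ℝ → ℂ) (hk : ∀ i, FR n (k i)) :
    FR (N * n) (fun x ξ => ∑ i ∈ Finset.range N, k i x ξ) := by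
  induction N with
  | zero => simpa using FR_zero
  | succ N ih =>
    simp only [Finset.sum_range_succ, Nat.succ_mul]
    exact FR_add ih (hk N)

lemma FR_one {u v : ℝ → ℂ} (hu : ContinuousOn u (Icc 0 1)) (hv : MemLp v 2 (volume : Measure ℝ)) :
    FR 1 (fun x ξ => u x * v ξ) := by
  have hu2 : MemLp u 2 muI := by
    obtain ⟨M, hM⟩ := isCompact_Icc.exists_bound_of_continuousOn hu
    refine MemLp.of_bound ((hu.mono Ioo_subset_Icc_self).aestronglyMeasurable measurableSet_Ioo) M ?_
    filter_upwards [ae_restrict_mem (measurableSet_Ioo)] with x hx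
    exact hM x (Ioo_subset_Icc_self hx)
  have hv2 : MemLp (fun ξ => (starRingEnd ℂ) (v ξ)) 2 (volume : Measure ℝ) := hv.star
  set φ : Lp ℂ 2 (volume : Measure ℝ) →L[ℂ] ℂ := innerSL ℂ (hv2.toLp _)
  have hφ : ∀ f : Lp ℂ 2 (volume : Measure ℝ), φ f = ∫ ξ, v ξ * (f : ℝ → ℂ) ξ := by
    intro f
    simp only [φ, innerSL_apply_apply, L2.inner_def]
    apply integral_congr_ae
    filter_upwards [hv2.coeFn_toLp] with ξ h
    rw [h]
    simp [mul_comm]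
  set G := (ContinuousLinearMap.toSpanSingleton ℂ (hu2.toLp u)).comp φ with hG
  refine ⟨G, ?_, ?_, fun x hx => hv.const_mul _, fun f => ?_⟩
  · have : ((G : Lp ℂ 2 (volume : Measure ℝ) →L[ℂ] Lp ℂ 2 muI) : Lp ℂ 2 (volume : Measure ℝ) →ₗ[ℂ] Lp ℂ 2 muI) = 
      (ContinuousLinearMap.toSpanSingleton ℂ (hu2.toLp u) : ℂ →ₗ[ℂ] Lp ℂ 2 muI) ∘ₗ (φ : Lp ℂ 2 (volume : Measure ℝ) →ₗ[ℂ] ℂ) := rfl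
    rw [this]
    have h1 := LinearMap.lift_rank_comp_le_right (φ : Lp ℂ 2 (volume : Measure ℝ) →ₗ[ℂ] ℂ) (ContinuousLinearMap.toSpanSingleton ℂ (hu2.toLp u) : ℂ →ₗ[ℂ] Lp ℂ 2 muI)
    simp only [Cardinal.lift_id] at h1
    refine h1.trans ((LinearMap.rank_le_range _).trans ?_)
    simp
  · have hc : IsCompactOperator (⇑φ) := by
      refine ⟨closedBall 0 1, isCompact_closedBall _ _, ?_⟩
      apply φ.continuous.continuousAt.preimage_mem_nhds
      rw [map_zero]
      exact closedBall_mem_nhds _ one_pos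
    exact hc.clm_comp (ContinuousLinearMap.toSpanSingleton ℂ (hu2.toLp u))
  · have : G f = (φ f) • hu2.toLp u := by simp [hG]
    rw [this]
    filter_upwards [Lp.coeFn_smul (φ f) (hu2.toLp u), hu2.coeFn_toLp] with x h1 h2
    rw [h1, Pi.smul_apply, h2, hφ, smul_eq_mul, mul_comm]
    simp only [mul_assoc]
    rw [integral_const_mul]

lemma abs_est {D : Lp ℂ 2 (volume : Measure ℝ) →L[ℂ] Lp ℂ 2 muI} {K : ℝ → ℝ → ℂ}
    (hD : ∀ f : Lp ℂ 2 (volume : Measure ℝ), ∀ᵐ x ∂muI, (D f : ℝ → ℂ) x = ∫ ξ, K x ξ * (f : ℝ → ℂ) ξ)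
    (hK : ∀ x ∈ Ioo (0:ℝ) 1, MemLp (K x) 2 (volume : Measure ℝ))
    {W : ℝ → ℝ} (hW : MemLp W 2 (volume : Measure ℝ)) {n : ℕ} {k : ℝ → ℝ → ℂ} (hk : FR n k) {c : ℝ} (hc : 0 ≤ c)
    (hb : ∀ x ∈ Ioo (0:ℝ) 1, ∀ ξ : ℝ, ξ ≠ 0 → ‖K x ξ - k x ξ‖ ≤ c * W ξ) :
    ∃ G : Lp ℂ 2 (volume : Measure ℝ) →L[ℂ] Lp ℂ 2 muI,
    LinearMap.rank (G : Lp ℂ 2 (volume : Measure ℝ) →ₗ[ℂ] Lp ℂ 2 muI) ≤ (n : Cardinal) ∧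
    IsCompactOperator (⇑G) ∧ ‖D - G‖ ≤ c * ‖hW.toLp W‖ := by
  obtain ⟨G, r1, c1, m1, e1⟩ := hk
  refine ⟨G, r1, c1, ContinuousLinearMap.opNorm_le_bound _ (by positivity) fun f => ?_⟩
  have key : ∀ᵐ x ∂muI, ‖((D - G) f : ℝ → ℂ) x‖ ≤ c * ‖hW.toLp W‖ * ‖f‖ := by
    filter_upwards [hD f, e1 f, Lp.coeFn_sub (D f) (G f),
      ae_restrict_mem (measurableSet_Ioo)] with x h1 h2 h3 hx
    rw [sub_apply, h3, Pi.sub_apply, h1, h2,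
      ← integral_sub (int_mul (hK x hx) f) (int_mul (m1 x hx) f)]
    have hv : MemLp (fun ξ => (starRingEnd ℂ) (K x ξ - k x ξ)) 2 (volume : Measure ℝ) :=
      ((hK x hx).sub (m1 x hx)).star
    have h4 : ∫ ξ, K x ξ * (f : ℝ → ℂ) ξ - k x ξ * (f : ℝ → ℂ) ξ = inner ℂ (hv.toLp _) f := by
      rw [L2.inner_def]
      apply integral_congr_ae
      filter_upwards [hv.coeFn_toLp] with ξ h
      rw [h]
      simp
      ring
    rw [h4]
    refine (norm_inner_le_norm _ _).trans ?_
    gcongr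
    apply Lp.norm_le_mul_norm_of_ae_le_mul
    have h0 : ∀ᵐ ξ : ℝ ∂volume, ξ ≠ 0 := by
      simp [ae_iff]
    filter_upwards [hv.coeFn_toLp, hW.coeFn_toLp, h0] with ξ h5 h6 h7
    rw [h5, h6, RCLike.norm_conj]
    refine (hb x hx ξ h7).trans ?_
    gcongr
    exact le_abs_self _
  have := Lp.norm_le_of_ae_bound (by positivity) key
  refine this.trans (le_of_eq ?_)
  have h1 : measureUnivNNReal muI = 1 := by
    rw [measureUnivNNReal]; simp
  simp [h1]

lemma count_est {D : Lp ℂ 2 (volume : Measure ℝ) →L[ℂ] Lp ℂ 2 muI} {C q : ℝ} (hq0 : 0 < q) (hq1 : q < 1)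
    (h : ∀ N : ℕ, ∃ G : Lp ℂ 2 (volume : Measure ℝ) →L[ℂ] Lp ℂ 2 muI,
    LinearMap.rank (G : Lp ℂ 2 (volume : Measure ℝ) →ₗ[ℂ] Lp ℂ 2 muI) ≤ ((3 * (N + 1) ^ 2 : ℕ) : Cardinal) ∧
    IsCompactOperator (⇑G) ∧ ‖D - G‖ ≤ C * q ^ N) {m : ℝ} (hm : 0 < m) :
    IsCompactOperator (⇑D) ∧
    ∃ μ C : ℝ, 0 < μ ∧ 0 < C ∧ ∀ t : ℝ, 1 < t →
      (sCount D t : ℝ) ≤ C * t ^ (1 / m - μ) := by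
  constructor
  · choose G hr hc hn using h
    refine isCompactOperator_of_tendsto (l := atTop) (F := G) ?_ (Eventually.of_forall hc)
    rw [tendsto_iff_norm_sub_tendsto_zero]
    have : Tendsto (fun N : ℕ => C * q ^ N) atTop (nhds 0) := by
      simpa using (tendsto_pow_atTop_nhds_zero_of_lt_one hq0.le hq1).const_mul C
    refine squeeze_zero (fun _ => norm_nonneg _) (fun N => ?_) this
    rw [norm_sub_rev]; exact hn N
  · set B := max C 1 with hB
    have hB1 : 1 ≤ B := le_max_right _ _
    set L := -Real.log q with hL
    have hL0 : 0 < L := by rw [hL]; linarith [Real.log_neg hq0 hq1]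
    set δ := 1 / (4 * m) with hδ
    have hδ0 : 0 < δ := by positivity
    set M := B ^ δ / δ / L + 2 with hM
    have hM0 : 0 < M := by positivity
    refine ⟨1 / (2 * m), 3 * M ^ 2, by positivity, by positivity, fun t ht => ?_⟩
    have ht0 : 0 < t := by linarith
    set N := ⌈Real.log (B * t) / L⌉₊ with hN
    have hlog : 0 ≤ Real.log (B * t) := Real.log_nonneg (by nlinarith)
    have hN1 : (N : ℝ) + 1 ≤ M * t ^ δ := by
      have h1 : (N : ℝ) < Real.log (B * t) / L + 1 := Nat.ceil_lt_add_one (by positivity)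
      have h2 : Real.log (B * t) ≤ (B * t) ^ δ / δ := Real.log_le_rpow_div (by positivity) hδ0
      rw [Real.mul_rpow (by positivity) ht0.le] at h2
      have h3 : Real.log (B * t) / L ≤ B ^ δ * t ^ δ / δ / L := by gcongr
      have h4 : 1 ≤ t ^ δ := Real.one_le_rpow ht.le hδ0.le
      have h5 : M * t ^ δ = B ^ δ * t ^ δ / δ / L + 2 * t ^ δ := by rw [hM]; ring
      linarith
    obtain ⟨G, hr, -, hn⟩ := h N
    have hG : ‖D - G‖ ≤ 1 / t := by
      refine hn.trans ?_
      have h1 : C * q ^ N ≤ B * q ^ N := by gcongr; exact le_max_left _ _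
      refine h1.trans ?_
      have h2 : Real.log (B * t) ≤ N * L := by
        have := Nat.le_ceil (Real.log (B * t) / L)
        rwa [div_le_iff₀ hL0] at this
      rw [le_div_iff₀ ht0]
      have h3 : q ^ N = Real.exp (-(N * L)) := by
        rw [hL, mul_neg, neg_neg, ← Real.log_pow, Real.exp_log (by positivity)]
      have h4 : B * t ≤ Real.exp (N * L) := by
        rwa [← Real.log_le_iff_le_exp (by positivity)]
      rw [h3, Real.exp_neg]
      have := Real.exp_pos (N * L)
      field_simp
      linarith
    have hsub : {k : ℕ | 1 / t < sVal D k} ⊆ (Finset.range (3 * (N + 1) ^ 2) : Set ℕ) := by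
      intro k hk
      simp only [Finset.coe_range, mem_Iio]
      by_contra hcon
      push Not at hcon
      have : sVal D k ≤ ‖D - G‖ := by
        apply csInf_le
        · exact ⟨0, by rintro _ ⟨G, -, rfl⟩; exact norm_nonneg _⟩
        · exact ⟨G, hr.trans (by exact_mod_cast hcon), rfl⟩
      have h2 : 1 / t < sVal D k := hk
      linarith
    have hcard : sCount D t ≤ 3 * (N + 1) ^ 2 := by
      have := Set.ncard_le_ncard hsub (Finset.finite_toSet _)
      rwa [Set.ncard_coe_finset, Finset.card_range] at this
    calc (sCount D t : ℝ) ≤ ((3 * (N + 1) ^ 2 : ℕ) : ℝ) := by exact_mod_cast hcard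
      _ = 3 * ((N : ℝ) + 1) ^ 2 := by push_cast; ring
      _ ≤ 3 * (M * t ^ δ) ^ 2 := by gcongr
      _ = 3 * M ^ 2 * t ^ (1 / m - 1 / (2 * m)) := by
        rw [mul_pow, ← Real.rpow_natCast (t ^ δ) 2, ← Real.rpow_mul ht0.le, mul_assoc]
        congr 3
        rw [hδ]; push_cast; field_simp; norm_num

def Pn (N : ℕ) (z : ℂ) : ℂ := ∑ j ∈ Finset.range N, z ^ j / (j.factorial : ℂ)
def Fn (N : ℕ) (z : ℂ) : ℂ := ∑ j ∈ Finset.range N, z ^ (j + 1) / ((j + 1).factorial : ℂ)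

lemma hasSum_cexp (z : ℂ) : HasSum (fun n : ℕ => z ^ n / (n.factorial : ℂ)) (Complex.exp z) := by
  rw [Complex.exp_eq_exp_ℂ]; exact NormedSpace.expSeries_div_hasSum_exp z

lemma hasSum_rexp (z : ℝ) : HasSum (fun n : ℕ => z ^ n / (n.factorial : ℝ)) (Real.exp z) := by
  rw [Real.exp_eq_exp_ℝ]; exact NormedSpace.expSeries_div_hasSum_exp z

lemma real_tail {y q : ℝ} (hy : 0 ≤ y) (hq0 : 0 < q) (hq1 : q < 1) (N : ℕ) :
    ∑' j : ℕ, y ^ (j + N) / ((j + N).factorial : ℝ) ≤ q ^ N * Real.exp (y / q) := by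
  have hs := (hasSum_rexp y).summable
  have hs' := (hasSum_rexp (y / q)).summable
  have h1 : ∀ j : ℕ, y ^ (j + N) / ((j + N).factorial : ℝ) ≤
      q ^ N * ((y / q) ^ (j + N) / ((j + N).factorial : ℝ)) := by
    intro j
    have hy' : y = q * (y / q) := by field_simp
    have : y ^ (j + N) ≤ q ^ N * (y / q) ^ (j + N) := by
      conv_lhs => rw [hy', mul_pow]
      gcongr ?_ * _
      exact pow_le_pow_of_le_one hq0.le hq1.le (by omega)
    calc _ ≤ (q ^ N * (y / q) ^ (j + N)) / ((j + N).factorial : ℝ) := by gcongr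
      _ = _ := by ring
  have hsN := (summable_nat_add_iff N).2 hs
  have hsN' := (summable_nat_add_iff N).2 hs'
  refine (hsN.tsum_le_tsum h1 (hsN'.mul_left _)).trans ?_
  rw [tsum_mul_left]
  gcongr
  rw [← (hasSum_rexp (y / q)).tsum_eq, ← hs'.sum_add_tsum_nat_add N]
  have : 0 ≤ ∑ i ∈ Finset.range N, (y / q) ^ i / (i.factorial : ℝ) := 
    Finset.sum_nonneg fun i _ => by positivity
  linarith

lemma Pn_err (z : ℂ) {q : ℝ} (hq0 : 0 < q) (hq1 : q < 1) (N : ℕ) :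
    ‖Complex.exp z - Pn N z‖ ≤ q ^ N * Real.exp (‖z‖ / q) := by
  have hs := (hasSum_cexp z).summable
  have hr := (summable_nat_add_iff N).2 (hasSum_rexp ‖z‖).summable
  rw [← (hasSum_cexp z).tsum_eq, ← hs.sum_add_tsum_nat_add N, Pn, add_sub_cancel_left]
  refine le_trans ?_ (real_tail (norm_nonneg z) hq0 hq1 N)
  refine tsum_of_norm_bounded hr.hasSum fun j => ?_
  simp

lemma Pn_le (z : ℂ) (N : ℕ) : ‖Pn N z‖ ≤ Real.exp ‖z‖ := by
  refine (norm_sum_le _ _).trans ?_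
  refine le_trans (le_of_eq ?_) (Real.sum_le_exp_of_nonneg (norm_nonneg z) N)
  simp

lemma fact_aux (y : ℝ) (hy : 0 ≤ y) (j : ℕ) :
    y ^ (j + 1) / ((j + 1).factorial : ℝ) ≤ y * (y ^ j / (j.factorial : ℝ)) := by
  rw [pow_succ, mul_comm, mul_div_assoc]
  gcongr
  omega

lemma Fn_le (z : ℂ) (N : ℕ) : ‖Fn N z‖ ≤ ‖z‖ * Real.exp ‖z‖ := by
  refine (norm_sum_le _ _).trans ?_
  refine le_trans ?_ (mul_le_mul_of_nonneg_left (Real.sum_le_exp_of_nonneg (norm_nonneg z) N) (norm_nonneg z))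
  rw [Finset.mul_sum]
  refine Finset.sum_le_sum fun j _ => ?_
  simpa using fact_aux ‖z‖ (norm_nonneg z) j

lemma Fn_err (z : ℂ) {q : ℝ} (hq0 : 0 < q) (hq1 : q < 1) (N : ℕ) :
    ‖(Complex.exp z - 1) - Fn N z‖ ≤ ‖z‖ * (q ^ N * Real.exp (‖z‖ / q)) := by
  have hs := (hasSum_cexp z).summable
  have hr := (summable_nat_add_iff N).2 (hasSum_rexp ‖z‖).summable
  have : Complex.exp z - 1 - Fn N z = ∑' j : ℕ, z ^ (j + (N + 1)) / ((j + (N + 1)).factorial : ℂ) := by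
    rw [← (hasSum_cexp z).tsum_eq, ← hs.sum_add_tsum_nat_add (N + 1), Finset.sum_range_succ', Fn]
    simp only [pow_zero, Nat.factorial_zero, Nat.cast_one, div_one]
    ring
  rw [this]
  refine le_trans ?_ (mul_le_mul_of_nonneg_left (real_tail (norm_nonneg z) hq0 hq1 N) (norm_nonneg z))
  refine tsum_of_norm_bounded (hr.hasSum.mul_left ‖z‖) fun j => ?_
  simpa [add_assoc] using fact_aux ‖z‖ (norm_nonneg z) (j + N)

lemma exp_div_le {y q : ℝ} (hy : 0 ≤ y) (hq0 : 0 < q) (hq1 : q < 1) : Real.exp y ≤ Real.exp (y / q) := by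
  apply Real.exp_le_exp.2
  rw [le_div_iff₀ hq0]; nlinarith

lemma prod_err {a b a' b' : ℂ} {α q : ℝ} {z w : ℝ} (hz : 0 ≤ z) (hw : 0 ≤ w) (hq0 : 0 < q) (hq1 : q < 1) (N : ℕ) (hα : 0 ≤ α)
    (h1 : ‖a - a'‖ ≤ α * (q ^ N * Real.exp (z / q))) (h2 : ‖a'‖ ≤ α * Real.exp z)
    (h3 : ‖b - b'‖ ≤ q ^ N * Real.exp (w / q)) (h4 : ‖b‖ ≤ Real.exp w) :
    ‖a * b - a' * b'‖ ≤ 2 * α * q ^ N * (Real.exp (z / q) * Real.exp (w / q)) := by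
  have e : a * b - a' * b' = (a - a') * b + a' * (b - b') := by ring
  rw [e]
  refine (norm_add_le _ _).trans ?_
  rw [norm_mul, norm_mul]
  have i1 : ‖a - a'‖ * ‖b‖ ≤ α * (q ^ N * Real.exp (z / q)) * Real.exp (w / q) := by
    gcongr; exact h4.trans (exp_div_le hw hq0 hq1)
  have i2 : ‖a'‖ * ‖b - b'‖ ≤ (α * Real.exp (z / q)) * (q ^ N * Real.exp (w / q)) := by
    gcongr; exact h2.trans (mul_le_mul_of_nonneg_left (exp_div_le hz hq0 hq1) hα)
  linarith

lemma PP_err (z w : ℂ) {q : ℝ} (hq0 : 0 < q) (hq1 : q < 1) (N : ℕ) :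
    ‖Complex.exp z * Complex.exp w - Pn N z * Pn N w‖ ≤ 2 * q ^ N * (Real.exp (‖z‖ / q) * Real.exp (‖w‖ / q)) := by
  have := prod_err (α := 1) (norm_nonneg z) (norm_nonneg w) hq0 hq1 N zero_le_one
    (by simpa using Pn_err z hq0 hq1 N) (by simpa using Pn_le z N) (Pn_err w hq0 hq1 N) (Complex.norm_exp_le_exp_norm w)
  simpa using this

lemma FP_err (z w : ℂ) {q : ℝ} (hq0 : 0 < q) (hq1 : q < 1) (N : ℕ) :
    ‖(Complex.exp z - 1) * Complex.exp w - Fn N z * Pn N w‖ ≤ 2 * ‖z‖ * q ^ N * (Real.exp (‖z‖ / q) * Real.exp (‖w‖ / q)) :=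
  prod_err (norm_nonneg z) (norm_nonneg w) hq0 hq1 N (norm_nonneg z)
    (Fn_err z hq0 hq1 N) (Fn_le z N) (Pn_err w hq0 hq1 N) (Complex.norm_exp_le_exp_norm w)

def Wt (q ξ : ℝ) : ℝ := if |ξ| < 2 then |ξ| ^ (1/2 - q) + 1 else |ξ| ^ (q - 3/2)

lemma Wt_meas (q : ℝ) : Measurable (Wt q) := by
  unfold Wt
  refine Measurable.ite (measurableSet_lt (by fun_prop) (by fun_prop)) (by fun_prop) (by fun_prop)

lemma Wt_memLp {q : ℝ} (hq0 : 0 < q) (hq1 : q < 1) : MemLp (Wt q) 2 (volume : Measure ℝ) := by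
  rw [memLp_two_iff_integrable_sq (Wt_meas q).aestronglyMeasurable]
  have h1 : IntegrableOn (fun ξ => Wt q ξ ^ 2) (Ioo 0 2) := by
    have a1 : IntegrableOn (fun ξ : ℝ => ξ ^ (1 - 2 * q)) (Ioo 0 2) :=
      (intervalIntegral.integrableOn_Ioo_rpow_iff two_pos).2 (by linarith)
    have a2 : IntegrableOn (fun ξ : ℝ => ξ ^ (1 / 2 - q)) (Ioo 0 2) :=
      (intervalIntegral.integrableOn_Ioo_rpow_iff two_pos).2 (by linarith)
    have a3 : IntegrableOn (fun ξ : ℝ => (1 : ℝ)) (Ioo (0:ℝ) 2) := by simp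
    refine ((a1.add (a2.const_mul 2)).add a3).congr_fun (fun ξ hξ => ?_) measurableSet_Ioo
    have hp : 0 < ξ := hξ.1
    simp only [Wt, abs_of_pos hp, hξ.2, if_true, Pi.add_apply]
    have : ξ ^ (1 - 2 * q) = (ξ ^ (1 / 2 - q)) ^ 2 := by
      rw [← Real.rpow_natCast, ← Real.rpow_mul hp.le]; congr 1; push_cast; ring
    rw [this]; ring
  have h2 : IntegrableOn (fun ξ => Wt q ξ ^ 2) (Ici 2) := by
    have a1 : IntegrableOn (fun ξ : ℝ => ξ ^ (2 * q - 3)) (Ici 2) := by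
      rw [integrableOn_Ici_iff_integrableOn_Ioi]
      exact integrableOn_Ioi_rpow_of_lt (by linarith) two_pos
    refine a1.congr_fun (fun ξ hξ => ?_) measurableSet_Ici
    have h2 : 2 ≤ ξ := hξ
    have hp : 0 < ξ := by linarith
    simp only [Wt, abs_of_pos hp, not_lt.2 h2, if_false]
    rw [← Real.rpow_natCast, ← Real.rpow_mul hp.le]; congr 1; push_cast; ring
  have h3 : IntegrableOn (fun ξ => Wt q ξ ^ 2) (Ioi 0) := by
    rw [← Ioo_union_Ici_eq_Ioi two_pos]; exact h1.union h2
  have h4 : IntegrableOn (fun ξ => Wt q ξ ^ 2) (Iio 0) := by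
    have := h3.comp_neg
    simpa [Wt] using this
  rw [← integrableOn_univ, ← Iio_union_Ici (a := (0:ℝ))]
  exact h4.union ((integrableOn_Ici_iff_integrableOn_Ioi).2 h3)

lemma Wt_lo {q ξ : ℝ} (h2 : |ξ| < 2) : 1 ≤ Wt q ξ := by
  simp only [Wt, h2, if_true]
  have := Real.rpow_nonneg (abs_nonneg ξ) (1 / 2 - q)
  linarith

lemma Wt_nonneg (q ξ : ℝ) : 0 ≤ Wt q ξ := by
  unfold Wt; split_ifs <;> positivity

lemma Wt_small {q ξ : ℝ} (hq0 : 0 < q) (hq1 : q < 1) (h0 : ξ ≠ 0) (h2 : |ξ| < 2) :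
    |ξ| * |ξ| ^ (-(1/2) : ℝ) * Real.exp (q * |(Real.log |ξ|)|) ≤ 4 * Wt q ξ := by
  have hp : 0 < |ξ| := abs_pos.2 h0
  have e : Real.exp (q * |(Real.log |ξ|)|) ≤ |ξ| ^ (-q) + |ξ| ^ q := by
    rw [Real.rpow_def_of_pos hp, Real.rpow_def_of_pos hp]
    rcases abs_cases (Real.log |ξ|) with ⟨h, _⟩ | ⟨h, _⟩ <;> rw [h]
    · have := Real.exp_pos (Real.log |ξ| * -q)
      rw [mul_comm q]; linarith
    · have := Real.exp_pos (Real.log |ξ| * q)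
      rw [show q * -Real.log |ξ| = Real.log |ξ| * -q by ring]; linarith
  have e2 : |ξ| * |ξ| ^ (-(1/2) : ℝ) = |ξ| ^ (1/2 : ℝ) := by
    rw [← Real.rpow_one_add' hp.le (by norm_num)]; norm_num
  rw [e2]
  calc _ ≤ |ξ| ^ (1/2 : ℝ) * (|ξ| ^ (-q) + |ξ| ^ q) := by gcongr
    _ = |ξ| ^ (1/2 - q) + |ξ| ^ (1/2 + q) := by
      rw [mul_add, ← Real.rpow_add hp, ← Real.rpow_add hp]; rfl
    _ ≤ |ξ| ^ (1/2 - q) + 4 := by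
      gcongr
      calc |ξ| ^ (1/2 + q) ≤ 2 ^ (1/2 + q) := by gcongr
        _ ≤ 2 ^ (2 : ℝ) := by gcongr <;> linarith
        _ = 4 := by norm_num
    _ ≤ _ := by
      simp only [Wt, h2, if_true]
      have := Real.rpow_nonneg (abs_nonneg ξ) (1 / 2 - q)
      linarith

lemma Wt_large {q ξ : ℝ} (h2 : 2 ≤ |ξ|) :
    |ξ| ^ (-(3/2) : ℝ) * Real.exp (q * |(Real.log |ξ|)|) = Wt q ξ := by
  have hp : 0 < |ξ| := by linarith
  have : 0 ≤ Real.log |ξ| := Real.log_nonneg (by linarith)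
  simp only [Wt, not_lt.2 h2, if_false]
  rw [abs_of_nonneg this, mul_comm q, ← Real.rpow_def_of_pos hp, ← Real.rpow_add hp]
  congr 1; ring

lemma memLp_of_Wt {q M : ℝ} (hq0 : 0 < q) (hq1 : q < 1) {v : ℝ → ℂ} (hv : Measurable v)
    (hb : ∀ ξ : ℝ, ξ ≠ 0 → ‖v ξ‖ ≤ M * Wt q ξ) : MemLp v 2 (volume : Measure ℝ) := by
  have h0 : ∀ᵐ ξ : ℝ ∂volume, ξ ≠ 0 := by
    simp [ae_iff]
  refine MemLp.of_le_mul (c := M) (Wt_memLp hq0 hq1) hv.aestronglyMeasurable ?_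
  filter_upwards [h0] with ξ h
  rw [Real.norm_of_nonneg (Wt_nonneg q ξ)]
  exact hb ξ h

lemma log_pow_le {q : ℝ} (hq0 : 0 < q) (w : ℝ) (j : ℕ) :
    |w| ^ j ≤ (j.factorial / q ^ j) * Real.exp (q * |w|) := by
  have := Real.pow_div_factorial_le_exp (q * |w|) (by positivity) j
  rw [div_le_iff₀ (by positivity), mul_pow] at this
  rw [div_mul_eq_mul_div, le_div_iff₀ (by positivity)]
  linarith

def vA (i j : ℕ) (ξ : ℝ) : ℂ :=
  if |ξ| < 2 then (ξ : ℂ) ^ (i + 1) * ((|ξ| ^ (-(1/2) : ℝ) : ℝ) : ℂ) * ((Real.log |ξ| : ℝ) : ℂ) ^ j else 0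
def vB (p : ℝ → ℝ) (i j : ℕ) (ξ : ℝ) : ℂ :=
  if |ξ| < 2 then (ξ : ℂ) ^ i * ((Real.log (p ξ) : ℝ) : ℂ) ^ j else 0
def vC (j : ℕ) (ξ : ℝ) : ℂ :=
  if |ξ| < 2 then 0 else ((|ξ| ^ (-(3/2) : ℝ) : ℝ) : ℂ) * ((Real.log |ξ| : ℝ) : ℂ) ^ j

lemma meas_lt2 : MeasurableSet {ξ : ℝ | |ξ| < 2} := measurableSet_lt (by fun_prop) (by fun_prop)

lemma vA_memLp (i j : ℕ) : MemLp (vA i j) 2 (volume : Measure ℝ) := by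
  have hm : Measurable (vA i j) := by
    unfold vA
    exact Measurable.ite meas_lt2 (by fun_prop) (by fun_prop)
  refine memLp_of_Wt (q := 1/2) (M := 2 ^ i * (j.factorial / (1/2) ^ j) * 4) (by norm_num) (by norm_num) hm fun ξ h0 => ?_
  by_cases h : |ξ| < 2
  · simp only [vA, h, if_true, norm_mul, norm_pow, Complex.norm_real, Real.norm_eq_abs]
    rw [abs_of_nonneg (Real.rpow_nonneg (abs_nonneg ξ) _)]
    have h1 := Wt_small (q := 1/2) (by norm_num) (by norm_num) h0 h
    have h2 := log_pow_le (q := 1/2) (by norm_num) (Real.log |ξ|) j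
    calc |ξ| ^ (i + 1) * |ξ| ^ (-(1/2) : ℝ) * |(Real.log |ξ|)| ^ j
        ≤ (2 ^ i * |ξ|) * |ξ| ^ (-(1/2) : ℝ) * ((j.factorial / (1/2) ^ j) * Real.exp (1/2 * |(Real.log |ξ|)|)) := by
          gcongr
          rw [pow_succ]; gcongr
      _ = 2 ^ i * (j.factorial / (1/2) ^ j) * (|ξ| * |ξ| ^ (-(1/2) : ℝ) * Real.exp (1/2 * |(Real.log |ξ|)|)) := by ring
      _ ≤ 2 ^ i * (j.factorial / (1/2) ^ j) * (4 * Wt (1/2) ξ) := by gcongr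
      _ = _ := by ring
  · simp only [vA, h, if_false, norm_zero]
    have := Wt_nonneg (1/2) ξ
    positivity

lemma vB_memLp {p : ℝ → ℝ} (hp : Continuous p) {L : ℝ} (hL : ∀ ξ : ℝ, |ξ| < 2 → |(Real.log (p ξ))| ≤ L)
    (i j : ℕ) : MemLp (vB p i j) 2 (volume : Measure ℝ) := by
  have hpm := hp.measurable
  have hm : Measurable (vB p i j) := by
    unfold vB
    exact Measurable.ite meas_lt2 (by fun_prop) (by fun_prop)
  have hL0 : 0 ≤ L := (abs_nonneg _).trans (hL 0 (by norm_num))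
  refine memLp_of_Wt (q := 1/2) (M := 2 ^ i * L ^ j) (by norm_num) (by norm_num) hm fun ξ h0 => ?_
  by_cases h : |ξ| < 2
  · simp only [vB, h, if_true, norm_mul, norm_pow, Complex.norm_real, Real.norm_eq_abs]
    calc |ξ| ^ i * |(Real.log (p ξ))| ^ j ≤ 2 ^ i * L ^ j := by gcongr; exact hL ξ h
      _ ≤ 2 ^ i * L ^ j * Wt (1/2) ξ := le_mul_of_one_le_right (by positivity) (Wt_lo h)
  · simp only [vB, h, if_false, norm_zero]
    have := Wt_nonneg (1/2) ξ
    positivity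

lemma vC_memLp (j : ℕ) : MemLp (vC j) 2 (volume : Measure ℝ) := by
  have hm : Measurable (vC j) := by
    unfold vC
    exact Measurable.ite meas_lt2 (by fun_prop) (by fun_prop)
  refine memLp_of_Wt (q := 1/2) (M := (j.factorial / (1/2) ^ j)) (by norm_num) (by norm_num) hm fun ξ h0 => ?_
  by_cases h : |ξ| < 2
  · simp only [vC, h, if_true, norm_zero]
    have := Wt_nonneg (1/2) ξ
    positivity
  · simp only [vC, h, if_false, norm_mul, norm_pow, Complex.norm_real, Real.norm_eq_abs]
    rw [abs_of_nonneg (Real.rpow_nonneg (abs_nonneg ξ) _)]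
    have h1 := Wt_large (q := 1/2) (not_lt.1 h)
    have h2 := log_pow_le (q := 1/2) (by norm_num) (Real.log |ξ|) j
    rw [← h1]
    calc |ξ| ^ (-(3/2) : ℝ) * |(Real.log |ξ|)| ^ j
        ≤ |ξ| ^ (-(3/2) : ℝ) * ((j.factorial / (1/2) ^ j) * Real.exp (1/2 * |(Real.log |ξ|)|)) := by gcongr
      _ = _ := by ring

/-- finite rank kernel (without prefactor) -/
def kN (H p : ℝ → ℝ) (N : ℕ) (x ξ : ℝ) : ℂ :=
  if |ξ| < 2 then
    ((|ξ| ^ (-(1/2) : ℝ) : ℝ) : ℂ) * (Fn N (Complex.I * x * ξ) * Pn N ((-(H x) * Real.log |ξ| : ℝ) : ℂ))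
      - Pn N (Complex.I * x * ξ) * Pn N ((-(H x + 1/2) * Real.log (p ξ) : ℝ) : ℂ)
  else -(((|ξ| ^ (-(3/2) : ℝ) : ℝ) : ℂ) * Pn N (((1 - H x) * Real.log |ξ| : ℝ) : ℂ))

lemma kN_FR {H p : ℝ → ℝ} {c : ℝ → ℂ} (hH : ContinuousOn H (Icc 0 1)) (hc : ContinuousOn c (Icc 0 1))
    (hp : Continuous p) {L : ℝ} (hL : ∀ ξ : ℝ, |ξ| < 2 → |(Real.log (p ξ))| ≤ L) (N : ℕ) :
    FR (N * (N * 1) + N * (N * 1) + N * 1) (fun x ξ => c x * kN H p N x ξ) := by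
  have hHc : ContinuousOn (fun x => ((H x : ℝ) : ℂ)) (Icc 0 1) := Complex.continuous_ofReal.comp_continuousOn hH
  have A := FR_sum N _ fun i => FR_sum N _ fun j => FR_one
    (u := fun x => c x * ((Complex.I * x) ^ (i + 1) / ((i+1).factorial : ℂ)) * ((-(H x : ℂ)) ^ j / (j.factorial : ℂ)))
    (by fun_prop) (vA_memLp i j)
  have B := FR_sum N _ fun i => FR_sum N _ fun j => FR_one
    (u := fun x => -(c x * ((Complex.I * x) ^ i / (i.factorial : ℂ)) * ((-((H x : ℂ) + 1/2)) ^ j / (j.factorial : ℂ))))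
    (by fun_prop) (vB_memLp hp hL i j)
  have C := FR_sum N _ fun j => FR_one
    (u := fun x => -(c x * ((1 - (H x : ℂ)) ^ j / (j.factorial : ℂ))))
    (by fun_prop) (vC_memLp j)
  have := FR_add (FR_add A B) C
  convert this using 3 with x ξ
  by_cases h : |ξ| < 2
  · simp only [kN, vA, vB, vC, h, if_true, mul_zero, Finset.sum_const_zero, add_zero, Fn, Pn]
    rw [Finset.sum_mul_sum, Finset.sum_mul_sum, mul_sub, sub_eq_add_neg]
    simp only [Finset.mul_sum, ← Finset.sum_neg_distrib]
    congr 1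
    all_goals
      refine Finset.sum_congr rfl fun i _ => Finset.sum_congr rfl fun j _ => ?_
      push_cast
      simp only [mul_pow]
      ring
  · simp only [kN, vA, vB, vC, h, if_false, mul_zero, Finset.sum_const_zero, zero_add, Pn]
    simp only [Finset.mul_sum, ← Finset.sum_neg_distrib]
    refine Finset.sum_congr rfl fun j _ => ?_
    push_cast
    simp only [mul_pow]
    ring

def KT (H : ℝ → ℝ) (x ξ : ℝ) : ℂ :=
  (Complex.exp (Complex.I * x * ξ) - 1) * ((|ξ| ^ (-(H x + 1/2)) : ℝ) : ℂ)
def KA (H p : ℝ → ℝ) (x ξ : ℝ) : ℂ :=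
  Complex.exp (Complex.I * x * ξ) * ((p ξ ^ (-(H x + 1/2)) : ℝ) : ℂ)

lemma rpow_cexp {y : ℝ} (hy : 0 < y) (s a : ℝ) :
    ((y ^ (s + a) : ℝ) : ℂ) = ((y ^ s : ℝ) : ℂ) * Complex.exp ((a * Real.log y : ℝ) : ℂ) := by
  rw [Real.rpow_add hy, Complex.ofReal_mul, ← Complex.ofReal_exp, Real.rpow_def_of_pos hy a, mul_comm a]

section est
variable {H p : ℝ → ℝ} {q L x ξ : ℝ}

lemma z1_norm (hx : x ∈ Ioo (0:ℝ) 1) : ‖Complex.I * x * ξ‖ ≤ |ξ| := by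
  simp only [norm_mul, Complex.norm_I, Complex.norm_real, Real.norm_eq_abs, one_mul, abs_of_pos hx.1]
  nlinarith [abs_nonneg ξ, hx.2]

lemma real_norm_div {a w q : ℝ} (hq0 : 0 < q) (ha : |a| ≤ q ^ 2) : ‖((a * w : ℝ) : ℂ)‖ / q ≤ q * |w| := by
  rw [Complex.norm_real, Real.norm_eq_abs, abs_mul, div_le_iff₀ hq0]
  nlinarith [abs_nonneg w]

lemma errA (hq0 : 0 < q) (hq1 : q < 1) (hx : x ∈ Ioo (0:ℝ) 1) (h0 : ξ ≠ 0) (h : |ξ| < 2)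
    (hH0 : 0 < H x) (hH2 : H x ≤ q ^ 2) (N : ℕ) :
    ‖KT H x ξ - ((|ξ| ^ (-(1/2) : ℝ) : ℝ) : ℂ) * (Fn N (Complex.I * x * ξ) * Pn N ((-(H x) * Real.log |ξ| : ℝ) : ℂ))‖
      ≤ 8 * Real.exp (2 / q) * q ^ N * Wt q ξ := by
  have hp : 0 < |ξ| := abs_pos.2 h0
  have e : KT H x ξ = ((|ξ| ^ (-(1/2) : ℝ) : ℝ) : ℂ) * ((Complex.exp (Complex.I * x * ξ) - 1) *
      Complex.exp ((-(H x) * Real.log |ξ| : ℝ) : ℂ)) := by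
    rw [KT, show -(H x + 1/2) = -(1/2) + -(H x) by ring, rpow_cexp hp]; ring
  rw [e, ← mul_sub, norm_mul, Complex.norm_real, Real.norm_of_nonneg (Real.rpow_nonneg hp.le _)]
  have h1 := FP_err (Complex.I * x * ξ) ((-(H x) * Real.log |ξ| : ℝ) : ℂ) hq0 hq1 N
  have h2 : ‖((-(H x) * Real.log |ξ| : ℝ) : ℂ)‖ / q ≤ q * |(Real.log |ξ|)| :=
    real_norm_div hq0 (by rwa [abs_neg, abs_of_pos hH0])
  have h3 : ‖Complex.I * x * ξ‖ ≤ |ξ| := z1_norm hx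
  have h4 : ‖Complex.I * x * ξ‖ / q ≤ 2 / q := by gcongr; linarith
  calc _ ≤ |ξ| ^ (-(1/2) : ℝ) * (2 * ‖Complex.I * x * ξ‖ * q ^ N * (Real.exp (‖Complex.I * x * ξ‖ / q) * Real.exp (‖((-(H x) * Real.log |ξ| : ℝ) : ℂ)‖ / q))) := by gcongr
    _ ≤ |ξ| ^ (-(1/2) : ℝ) * (2 * |ξ| * q ^ N * (Real.exp (2 / q) * Real.exp (q * |(Real.log |ξ|)|))) := by gcongr
    _ = 2 * q ^ N * Real.exp (2 / q) * (|ξ| * |ξ| ^ (-(1/2) : ℝ) * Real.exp (q * |(Real.log |ξ|)|)) := by ring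
    _ ≤ 2 * q ^ N * Real.exp (2 / q) * (4 * Wt q ξ) := by
      exact mul_le_mul_of_nonneg_left (Wt_small hq0 hq1 h0 h) (by positivity)
    _ = _ := by ring

lemma errB (hq0 : 0 < q) (hq1 : q < 1) (hx : x ∈ Ioo (0:ℝ) 1) (h : |ξ| < 2) (hp : 0 < p ξ)
    (hL : |(Real.log (p ξ))| ≤ L) (hH0 : 0 < H x) (hH1 : H x < 1) (N : ℕ) :
    ‖KA H p x ξ - Pn N (Complex.I * x * ξ) * Pn N ((-(H x + 1/2) * Real.log (p ξ) : ℝ) : ℂ)‖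
      ≤ 2 * Real.exp (2 / q) * Real.exp (2 * L / q) * q ^ N * Wt q ξ := by
  have e : KA H p x ξ = Complex.exp (Complex.I * x * ξ) * Complex.exp ((-(H x + 1/2) * Real.log (p ξ) : ℝ) : ℂ) := by
    have := rpow_cexp hp 0 (-(H x + 1/2))
    rw [zero_add, Real.rpow_zero, Complex.ofReal_one, one_mul] at this
    rw [KA, this]
  rw [e]
  have h1 := PP_err (Complex.I * x * ξ) ((-(H x + 1/2) * Real.log (p ξ) : ℝ) : ℂ) hq0 hq1 N
  have h2 : ‖((-(H x + 1/2) * Real.log (p ξ) : ℝ) : ℂ)‖ ≤ 2 * L := by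
    rw [Complex.norm_real, Real.norm_eq_abs, abs_mul]
    gcongr
    rw [abs_neg, abs_of_pos (by linarith)]; linarith
  have h3 : ‖Complex.I * x * ξ‖ ≤ 2 := (z1_norm hx).trans h.le
  calc _ ≤ _ := h1
    _ ≤ 2 * q ^ N * (Real.exp (2 / q) * Real.exp (2 * L / q)) := by gcongr
    _ = 2 * Real.exp (2 / q) * Real.exp (2 * L / q) * q ^ N := by ring
    _ ≤ _ := le_mul_of_one_le_right (by positivity) (Wt_lo h)

lemma errC (hq0 : 0 < q) (hq1 : q < 1) (h : 2 ≤ |ξ|)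
    (hH1 : H x < 1) (hH2 : 1 - H x ≤ q ^ 2) (N : ℕ) :
    ‖((|ξ| ^ (-(H x + 1/2)) : ℝ) : ℂ) - ((|ξ| ^ (-(3/2) : ℝ) : ℝ) : ℂ) * Pn N (((1 - H x) * Real.log |ξ| : ℝ) : ℂ)‖
      ≤ q ^ N * Wt q ξ := by
  have hp : 0 < |ξ| := by linarith
  rw [show -(H x + 1/2) = -(3/2) + (1 - H x) by ring, rpow_cexp hp, ← mul_sub, norm_mul, Complex.norm_real,
    Real.norm_of_nonneg (Real.rpow_nonneg hp.le _)]
  have h1 := Pn_err (((1 - H x) * Real.log |ξ| : ℝ) : ℂ) hq0 hq1 N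
  have h2 : ‖(((1 - H x) * Real.log |ξ| : ℝ) : ℂ)‖ / q ≤ q * |(Real.log |ξ|)| :=
    real_norm_div hq0 (by rwa [abs_of_pos (by linarith)])
  rw [← Wt_large h]
  calc _ ≤ |ξ| ^ (-(3/2) : ℝ) * (q ^ N * Real.exp (‖(((1 - H x) * Real.log |ξ| : ℝ) : ℂ)‖ / q)) := by gcongr
    _ ≤ |ξ| ^ (-(3/2) : ℝ) * (q ^ N * Real.exp (q * |(Real.log |ξ|)|)) := by gcongr
    _ = _ := by ring

/-- the overall constant -/
def Ec (q L : ℝ) : ℝ := 8 * Real.exp (2 / q) + 2 * Real.exp (2 / q) * Real.exp (2 * L / q) + 1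

lemma err_tot (hq0 : 0 < q) (hq1 : q < 1) (hx : x ∈ Ioo (0:ℝ) 1) (h0 : ξ ≠ 0)
    (hp : 0 < p ξ) (hp2 : 2 ≤ |ξ| → p ξ = |ξ|)
    (hL : |ξ| < 2 → |(Real.log (p ξ))| ≤ L) (hH0 : 0 < H x) (hH1 : H x < 1)
    (hH2 : H x ≤ q ^ 2) (hH3 : 1 - H x ≤ q ^ 2) (N : ℕ) :
    ‖(KT H x ξ - KA H p x ξ) - kN H p N x ξ‖ ≤ Ec q L * q ^ N * Wt q ξ := by
  have hW := Wt_nonneg q ξ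
  have e1 : 0 ≤ Real.exp (2 / q) * (q ^ N * Wt q ξ) := by positivity
  have e2 : 0 ≤ Real.exp (2 / q) * Real.exp (2 * L / q) * (q ^ N * Wt q ξ) := by positivity
  have e3 : 0 ≤ q ^ N * Wt q ξ := by positivity
  rw [Ec]
  by_cases h : |ξ| < 2
  · simp only [kN, h, if_true]
    have a := errA (H := H) hq0 hq1 hx h0 h hH0 hH2 N
    have b := errB (H := H) hq0 hq1 hx h hp (hL h) hH0 hH1 N
    rw [sub_sub_sub_comm]
    refine (norm_sub_le _ _).trans ?_
    linarith
  · simp only [kN, h, if_false]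
    have c := errC (H := H) hq0 hq1 (not_lt.1 h) hH1 hH3 N
    have e : KT H x ξ - KA H p x ξ = -((|ξ| ^ (-(H x + 1/2)) : ℝ) : ℂ) := by
      rw [KT, KA, hp2 (not_lt.1 h)]; ring
    rw [e, neg_sub_neg, norm_sub_rev]
    linarith

lemma KA_bd (hq0 : 0 < q) (hq1 : q < 1) (hx : x ∈ Ioo (0:ℝ) 1)
    (hp : 0 < p ξ) (hp2 : 2 ≤ |ξ| → p ξ = |ξ|)
    (hL : |ξ| < 2 → |(Real.log (p ξ))| ≤ L) (hH0 : 0 < H x) (hH1 : H x < 1)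
    (hH3 : 1 - H x ≤ q ^ 2) :
    ‖KA H p x ξ‖ ≤ Ec q L * Wt q ξ := by
  have hW := Wt_nonneg q ξ
  have e1 : 0 ≤ Real.exp (2 / q) * Wt q ξ := by positivity
  have e2 : 0 ≤ Real.exp (2 / q) * Real.exp (2 * L / q) * Wt q ξ := by positivity
  rw [Ec]
  by_cases h : |ξ| < 2
  · have b := errB (H := H) hq0 hq1 hx h hp (hL h) hH0 hH1 0
    simp only [Pn, Finset.range_zero, Finset.sum_empty, mul_zero, sub_zero, pow_zero] at b
    linarith
  · have c := errC (H := H) hq0 hq1 (not_lt.1 h) hH1 hH3 0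
    simp only [Pn, Finset.range_zero, Finset.sum_empty, mul_zero, sub_zero, pow_zero] at c
    have e : ‖KA H p x ξ‖ = ‖((|ξ| ^ (-(H x + 1/2)) : ℝ) : ℂ)‖ := by
      rw [KA, hp2 (not_lt.1 h), norm_mul, mul_assoc, ← Complex.ofReal_mul, mul_comm Complex.I, Complex.norm_exp_ofReal_mul_I, one_mul]
    rw [e]
    linarith
end est

lemma Cstar_cont : ContinuousOn Cstar (Ioo 0 1) := by
  unfold Cstar
  have : ContinuousOn (fun H : ℝ => Real.Gamma (2 * H + 1)) (Ioo 0 1) := by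
    intro y hy
    have h1 : ContinuousAt Real.Gamma (2 * y + 1) := by
      apply (Real.differentiableAt_Gamma _).continuousAt
      intro m hm
      have : (0:ℝ) ≤ m := Nat.cast_nonneg m
      linarith [hy.1]
    exact (ContinuousAt.comp (f := fun H : ℝ => 2 * H + 1) h1 (by fun_prop)).continuousWithinAt
  exact ((this.mul (by fun_prop)).div_const _).sqrt

lemma holder_cont {H : ℝ → ℝ} {r : ℝ} (hr : 0 < r) {s : Set ℝ} (h : HolderOn H r s) : ContinuousOn H s := by
  obtain ⟨C, hC⟩ := h
  intro x hx
  rw [ContinuousWithinAt, tendsto_iff_dist_tendsto_zero]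
  have h1 : Tendsto (fun y => C * |y - x| ^ r) (nhdsWithin x s) (nhds 0) := by
    have : Continuous fun y => C * |y - x| ^ r := by
      have : Continuous fun y => |y - x| ^ r := Continuous.rpow_const (by fun_prop) fun _ => Or.inr hr.le
      fun_prop
    have h2 := this.tendsto x
    simp only [sub_self, abs_zero, Real.zero_rpow hr.ne', mul_zero] at h2
    exact h2.mono_left nhdsWithin_le_nhds
  refine squeeze_zero' (Eventually.of_forall fun _ => dist_nonneg) ?_ h1
  filter_upwards [self_mem_nhdsWithin] with y hy
  rw [Real.dist_eq]
  exact hC y hy x hx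

/-- The mBM operator 𝕋 is approximated, in the sense of singular value counting functions,
by the pseudodifferential operator 𝔸 with regularized symbol. -/
theorem mBM_operator_minus_psdo_counting_bound
    (H : ℝ → ℝ) (r : ℝ) (hr : 0 < r) (hHol : HolderOn H r (Icc 0 1))
    (hrange : ∀ x ∈ Icc (0:ℝ) 1, 0 < H x ∧ H x < 1)
    (Hmin : ℝ) (hHmin : IsLeast (H '' Icc 0 1) Hmin)
    -- the regularized symbol p
    (p : ℝ → ℝ) (hpsm : ContDiff ℝ (⊤ : ℕ∞) p) (hppos : ∀ ξ : ℝ, 0 < p ξ)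
    (hpeven : ∀ ξ : ℝ, p (-ξ) = p ξ)
    (hp₂ : ∀ ξ : ℝ, 2 ≤ |ξ| → p ξ = |ξ|) (hp₁ : ∀ ξ : ℝ, |ξ| ≤ 1 → p ξ = 1)
    -- the operators
    (T A : Lp ℂ 2 (volume : Measure ℝ) →L[ℂ] Lp ℂ 2 (volume.restrict (Ioo (0:ℝ) 1)))
    (hT : ∀ f : Lp ℂ 2 (volume : Measure ℝ),
      ∀ᵐ x ∂(volume.restrict (Ioo (0:ℝ) 1)),
        (T f : ℝ → ℂ) x = (Cstar (H x) : ℂ) *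
          ∫ ξ : ℝ, (Complex.exp (Complex.I * x * ξ) - 1) *
            ((|ξ| ^ (-(H x + 1/2)) : ℝ) : ℂ) * (f : ℝ → ℂ) ξ)
    (hA : ∀ f : Lp ℂ 2 (volume : Measure ℝ),
      ∀ᵐ x ∂(volume.restrict (Ioo (0:ℝ) 1)),
        (A f : ℝ → ℂ) x = (Cstar (H x) : ℂ) *
          ∫ ξ : ℝ, Complex.exp (Complex.I * x * ξ) *
            ((p ξ ^ (-(H x + 1/2)) : ℝ) : ℂ) * (f : ℝ → ℂ) ξ) :
    IsCompactOperator (⇑(T - A)) ∧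
    ∃ μ C : ℝ, 0 < μ ∧ 0 < C ∧ ∀ t : ℝ, 1 < t →
      (sCount (T - A) t : ℝ) ≤ C * t ^ (1 / (Hmin + 1/2) - μ) := by
  have hHc := holder_cont hr hHol
  have hcc : ContinuousOn (fun x => ((Cstar (H x) : ℝ) : ℂ)) (Icc 0 1) :=
    Complex.continuous_ofReal.comp_continuousOn (Cstar_cont.comp hHc fun x hx => hrange x hx)
  have hpc : Continuous p := hpsm.continuous
  obtain ⟨M, hM⟩ := isCompact_Icc.exists_bound_of_continuousOn hcc
  have hM0 : 0 ≤ M := (norm_nonneg _).trans (hM 0 (by simp))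
  obtain ⟨L, hL⟩ := (isCompact_Icc (a := (-2:ℝ)) (b := 2)).exists_bound_of_continuousOn
    (f := fun ξ => Real.log (p ξ)) (hpc.log fun ξ => (hppos ξ).ne').continuousOn
  have hL' : ∀ ξ : ℝ, |ξ| < 2 → |(Real.log (p ξ))| ≤ L := fun ξ h =>
    hL ξ ⟨by linarith [(abs_lt.1 h).1], by linarith [(abs_lt.1 h).2]⟩
  -- the ratio q
  obtain ⟨xm, hxm, hxm'⟩ := isCompact_Icc.exists_isMaxOn (nonempty_Icc.2 zero_le_one) hHc
  obtain ⟨⟨x0, hx0, hx0'⟩, hlow⟩ := hHmin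
  set b := max (H xm) (1 - Hmin) with hb
  have hb0 : 0 < b := lt_max_of_lt_left (hrange xm hxm).1
  have hHm0 : 0 < Hmin := by rw [← hx0']; exact (hrange x0 hx0).1
  have hb1 : b < 1 := max_lt (hrange xm hxm).2 (by linarith)
  set q := Real.sqrt b with hq
  have hqq : q ^ 2 = b := Real.sq_sqrt hb0.le
  have hq0 : 0 < q := Real.sqrt_pos.2 hb0
  have hq1 : q < 1 := by nlinarith
  have hH2 : ∀ x ∈ Icc (0:ℝ) 1, H x ≤ q ^ 2 := fun x hx => by
    rw [hqq]; exact (hxm' hx).trans (le_max_left _ _)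
  have hH3 : ∀ x ∈ Icc (0:ℝ) 1, 1 - H x ≤ q ^ 2 := fun x hx => by
    rw [hqq]; have := hlow (mem_image_of_mem H hx); exact le_trans (by linarith) (le_max_right _ _)
  have err : ∀ x ∈ Ioo (0:ℝ) 1, ∀ ξ : ℝ, ξ ≠ 0 → ∀ N : ℕ,
      ‖(KT H x ξ - KA H p x ξ) - kN H p N x ξ‖ ≤ Ec q L * q ^ N * Wt q ξ := by
    intro x hx ξ h0 N
    have hx' := Ioo_subset_Icc_self hx
    exact err_tot hq0 hq1 hx h0 (hppos ξ) (hp₂ ξ) (hL' ξ) (hrange x hx').1 (hrange x hx').2 (hH2 x hx') (hH3 x hx') N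
  have hpm := hpc.measurable
  have mA : ∀ x ∈ Ioo (0:ℝ) 1, MemLp (KA H p x) 2 (volume : Measure ℝ) := by
    intro x hx
    have hx' := Ioo_subset_Icc_self hx
    refine memLp_of_Wt (M := Ec q L) hq0 hq1 (by unfold KA; fun_prop) fun ξ _ => ?_
    exact KA_bd hq0 hq1 hx (hppos ξ) (hp₂ ξ) (hL' ξ) (hrange x hx').1 (hrange x hx').2 (hH3 x hx')
  have mD : ∀ x ∈ Ioo (0:ℝ) 1, MemLp (fun ξ => KT H x ξ - KA H p x ξ) 2 (volume : Measure ℝ) := by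
    intro x hx
    refine memLp_of_Wt (M := Ec q L) hq0 hq1 (by unfold KA KT; fun_prop) fun ξ h0 => ?_
    have := err x hx ξ h0 0
    simpa [kN, Pn, Fn] using this
  have mT : ∀ x ∈ Ioo (0:ℝ) 1, MemLp (KT H x) 2 (volume : Measure ℝ) := by
    intro x hx
    have := (mD x hx).add (mA x hx)
    convert this using 1
    ext ξ; simp
  have hD : ∀ f : Lp ℂ 2 (volume : Measure ℝ), ∀ᵐ x ∂muI, ((T - A) f : ℝ → ℂ) x =
      ∫ ξ, ((Cstar (H x) : ℝ) : ℂ) * (KT H x ξ - KA H p x ξ) * (f : ℝ → ℂ) ξ := by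
    intro f
    filter_upwards [hT f, hA f, Lp.coeFn_sub (T f) (A f),
      ae_restrict_mem (measurableSet_Ioo)] with x h1 h2 h3 hx
    rw [sub_apply, h3, Pi.sub_apply, h1, h2, ← mul_sub]
    have h4 := integral_sub (int_mul (mT x hx) f) (int_mul (mA x hx) f)
    simp only [KT, KA] at h4 ⊢
    rw [← h4, ← integral_const_mul]
    congr 1
    ext ξ
    ring
  refine count_est (C := M * Ec q L * ‖(Wt_memLp hq0 hq1).toLp (Wt q)‖) hq0 hq1 (fun N => ?_) (by linarith)
  have hE : 0 ≤ Ec q L := by unfold Ec; positivity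
  obtain ⟨G, g1, g2, g3⟩ := abs_est hD (fun x hx => (mD x hx).const_mul _) (Wt_memLp hq0 hq1)
    (kN_FR hHc hcc hpc hL' N) (c := M * Ec q L * q ^ N) (by positivity) (fun x hx ξ h0 => by
      rw [← mul_sub, norm_mul]
      calc _ ≤ M * (Ec q L * q ^ N * Wt q ξ) := by
            gcongr
            · exact hM x (Ioo_subset_Icc_self hx)
            · exact err x hx ξ h0 N
        _ = _ := by ring)
  refine ⟨G, g1.trans ?_, g2, g3.trans (le_of_eq (by ring))⟩
  have : N * (N * 1) + N * (N * 1) + N * 1 ≤ 3 * (N + 1) ^ 2 := by nlinarith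
  exact_mod_cast this
end
end

section
/- Let A : H₁ → H₂ and B : H₂ → H₃ be compact bounded linear operators between complex Hilbert spaces, and let p₁, p₂ > 0. If 𝒩(t,A) = O(t^{p₁}) and 𝒩(t,B) = O(t^{p₂}) as t → ∞, then 𝒩(t, B∘A) = O(t^{p}) as t → ∞, where 1/p = 1/p₁ + 1/p₂. -/
open MeasureTheory Set Filter Asymptotics
open scoped ENNReal NNReal Real Topology

noncomputable section

section helpers
variable {E F K : Type*} [NormedAddCommGroup E] [NormedAddCommGroup F] [NormedAddCommGroup K]
    [NormedSpace ℂ E] [NormedSpace ℂ F] [NormedSpace ℂ K]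

lemma sVal_le (A G : E →L[ℂ] F) (k : ℕ)
    (h : LinearMap.rank (G : E →ₗ[ℂ] F) ≤ (k : Cardinal)) : sVal A k ≤ ‖A - G‖ := by
  refine csInf_le ⟨0, ?_⟩ ⟨G, h, rfl⟩
  rintro c ⟨G, -, rfl⟩
  exact norm_nonneg _

lemma sVal_ex (A : E →L[ℂ] F) (k : ℕ) (c : ℝ) (h : sVal A k < c) :
    ∃ G : E →L[ℂ] F, LinearMap.rank (G : E →ₗ[ℂ] F) ≤ (k : Cardinal) ∧ ‖A - G‖ < c := by
  have hne : {c : ℝ | ∃ G : E →L[ℂ] F,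
      LinearMap.rank (G : E →ₗ[ℂ] F) ≤ (k : Cardinal) ∧ c = ‖A - G‖}.Nonempty :=
    ⟨_, 0, by simp, rfl⟩
  obtain ⟨_, ⟨G, hG, rfl⟩, h2⟩ := exists_lt_of_csInf_lt hne h
  exact ⟨G, hG, h2⟩

lemma sVal_anti (A : E →L[ℂ] F) {m n : ℕ} (h : m ≤ n) : sVal A n ≤ sVal A m := by
  refine le_of_forall_gt_imp_ge_of_dense fun c hc => ?_
  obtain ⟨G, hG, h2⟩ := sVal_ex A m c hc
  exact (sVal_le A G n (hG.trans (by exact_mod_cast h))).trans h2.le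

lemma sVal_comp_aux (A : E →L[ℂ] F) (B : F →L[ℂ] K) (m n : ℕ) (a b : ℝ)
    (ha : sVal A m < a) (hb : sVal B n < b) : sVal (B.comp A) (m + n) ≤ a * b := by
  obtain ⟨S, hS, hSa⟩ := sVal_ex A m a ha
  obtain ⟨T, hT, hTb⟩ := sVal_ex B n b hb
  have h1 : LinearMap.rank ((B.comp S + T.comp (A - S) : E →L[ℂ] K) : E →ₗ[ℂ] K)
      ≤ ((m + n : ℕ) : Cardinal) := by
    push_cast
    refine (LinearMap.rank_add_le _ _).trans (add_le_add ?_ ?_)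
    · have := LinearMap.lift_rank_comp_le_right (S : E →ₗ[ℂ] F) (B : F →ₗ[ℂ] K)
      have h3 := this.trans (Cardinal.lift_le.2 hS)
      simpa using h3
    · exact (LinearMap.rank_comp_le_left _ _).trans hT
  refine (sVal_le _ _ _ h1).trans ?_
  have h2 : B.comp A - (B.comp S + T.comp (A - S)) = (B - T).comp (A - S) := by
    ext x; simp; abel
  rw [h2, mul_comm]
  refine (ContinuousLinearMap.opNorm_comp_le _ _).trans ?_
  gcongr
  exact (norm_nonneg _).trans hTb.le

lemma sVal_comp (A : E →L[ℂ] F) (B : F →L[ℂ] K) (m n : ℕ) (a b : ℝ)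
    (ha : sVal A m ≤ a) (hb : sVal B n ≤ b) : sVal (B.comp A) (m + n) ≤ a * b := by
  have ht : Tendsto (fun e : ℝ => (a + e) * (b + e)) (𝓝[>] 0) (𝓝 (a * b)) := by
    have : Continuous (fun e : ℝ => (a + e) * (b + e)) := by fun_prop
    have := this.tendsto 0
    simp only [add_zero] at this
    exact this.mono_left nhdsWithin_le_nhds
  refine ge_of_tendsto ht ?_
  filter_upwards [self_mem_nhdsWithin] with e he
  have he : 0 < e := he
  exact sVal_comp_aux A B m n _ _ (by linarith) (by linarith)

lemma sCount_le (A : E →L[ℂ] F) (t : ℝ) (n : ℕ) (h : sVal A n ≤ 1 / t) : sCount A t ≤ n := by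
  have : {k : ℕ | 1 / t < sVal A k} ⊆ Set.Iio n := by
    intro k hk
    by_contra h2
    have h3 : n ≤ k := by simpa using h2
    exact absurd (sVal_anti A h3) (not_le.2 (lt_of_le_of_lt h hk))
  have h4 := Set.ncard_le_ncard this (Set.finite_Iio n)
  rw [sCount]
  simpa using h4

lemma sVal_sCount (A : E →L[ℂ] F) (t : ℝ) (h : ∃ k, sVal A k ≤ 1 / t) :
    sVal A (sCount A t) ≤ 1 / t := by
  classical
  have : {k : ℕ | 1 / t < sVal A k} = Set.Iio (Nat.find h) := by
    ext k
    simp only [Set.mem_setOf_eq, Set.mem_Iio]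
    constructor
    · intro hk
      by_contra h2
      exact absurd (sVal_anti A (not_lt.1 h2)) (not_le.2 (lt_of_le_of_lt (Nat.find_spec h) hk))
    · intro hk
      exact not_le.1 (Nat.find_min h hk)
  have h5 : sCount A t = Nat.find h := by
    rw [sCount, this]; simp
  rw [h5]
  exact Nat.find_spec h

end helpers

lemma sVal_small {E F : Type*} [NormedAddCommGroup E] [NormedSpace ℂ E]
    [NormedAddCommGroup F] [InnerProductSpace ℂ F] (A : E →L[ℂ] F)
    (hA : IsCompactOperator (⇑A)) (e : ℝ) (he : 0 < e) : ∃ k, sVal A k ≤ e := by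
  have hc : TotallyBounded (A '' Metric.closedBall 0 1) :=
    ((hA.isCompact_closure_image_closedBall (f := (A : E →ₗ[ℂ] F)) 1).totallyBounded).subset
      subset_closure
  obtain ⟨s, hs, hcov⟩ := Metric.totallyBounded_iff.1 hc e he
  let V := Submodule.span ℂ s
  haveI : FiniteDimensional ℂ V := FiniteDimensional.span_of_finite ℂ hs
  let G : E →L[ℂ] F := V.starProjection.comp A
  have hr : LinearMap.rank (G : E →ₗ[ℂ] F) ≤ (Module.finrank ℂ V : Cardinal) := by
    rw [Module.finrank_eq_rank]
    refine Submodule.rank_mono ?_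
    rintro _ ⟨x, rfl⟩
    exact V.starProjection_apply_mem (A x)
  refine ⟨_, (sVal_le A G _ hr).trans ?_⟩
  refine ContinuousLinearMap.opNorm_le_of_unit_norm he.le ?_
  intro x hx
  have hx2 : A x ∈ A '' Metric.closedBall 0 1 := ⟨x, by simp [hx], rfl⟩
  obtain ⟨y, hy, hxy⟩ := by simpa using hcov hx2
  have h1 := V.starProjection_minimal (A x)
  have h2 : ‖A x - V.starProjection (A x)‖ ≤ ‖A x - y‖ := by
    rw [h1]
    exact ciInf_le (f := fun v : V => ‖A x - v‖) ⟨0, by rintro _ ⟨v, rfl⟩; exact norm_nonneg _⟩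
      (⟨y, Submodule.subset_span hy⟩ : V)
  rw [dist_eq_norm] at hxy
  exact h2.trans hxy.le

/-- Composition rule for counting functions of singular values. -/
theorem sCount_comp_bigO
    {H₁ H₂ H₃ : Type*}
    [NormedAddCommGroup H₁] [InnerProductSpace ℂ H₁] [CompleteSpace H₁]
    [NormedAddCommGroup H₂] [InnerProductSpace ℂ H₂] [CompleteSpace H₂]
    [NormedAddCommGroup H₃] [InnerProductSpace ℂ H₃] [CompleteSpace H₃]
    (A : H₁ →L[ℂ] H₂) (B : H₂ →L[ℂ] H₃)
    (hAc : IsCompactOperator (⇑A)) (hBc : IsCompactOperator (⇑B))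
    (p₁ p₂ p : ℝ) (hp₁ : 0 < p₁) (hp₂ : 0 < p₂) (hp : 1/p = 1/p₁ + 1/p₂)
    (hA : (fun t : ℝ => (sCount A t : ℝ)) =O[atTop] fun t => t ^ p₁)
    (hB : (fun t : ℝ => (sCount B t : ℝ)) =O[atTop] fun t => t ^ p₂) :
    (fun t : ℝ => (sCount (B.comp A) t : ℝ)) =O[atTop] fun t => t ^ p := by
  have hpp : 0 < p := by
    have : 0 < 1 / p := by rw [hp]; positivity
    exact one_div_pos.1 this
  have hsum : p / p₁ + p / p₂ = 1 := by
    have : p * (1 / p) = 1 := by field_simp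
    rw [hp] at this
    rw [← this]; ring
  have t1 : Tendsto (fun t : ℝ => t ^ (p / p₁)) atTop atTop := tendsto_rpow_atTop (by positivity)
  have t2 : Tendsto (fun t : ℝ => t ^ (p / p₂)) atTop atTop := tendsto_rpow_atTop (by positivity)
  have e1 : (fun t : ℝ => (sCount A (t ^ (p / p₁)) : ℝ)) =O[atTop] fun t => t ^ p := by
    refine (hA.comp_tendsto t1).trans_eventuallyEq ?_
    filter_upwards [eventually_gt_atTop 0] with t ht
    simp only [Function.comp]
    rw [← Real.rpow_mul ht.le]
    congr 1; field_simp
  have e2 : (fun t : ℝ => (sCount B (t ^ (p / p₂)) : ℝ)) =O[atTop] fun t => t ^ p := by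
    refine (hB.comp_tendsto t2).trans_eventuallyEq ?_
    filter_upwards [eventually_gt_atTop 0] with t ht
    simp only [Function.comp]
    rw [← Real.rpow_mul ht.le]
    congr 1; field_simp
  refine IsBigO.trans (IsBigO.of_bound 1 ?_) (e1.add e2)
  filter_upwards [eventually_gt_atTop 0] with t ht
  have a := sVal_sCount A (t ^ (p / p₁)) (sVal_small A hAc _ (by positivity))
  have b := sVal_sCount B (t ^ (p / p₂)) (sVal_small B hBc _ (by positivity))
  have c := sVal_comp A B _ _ _ _ a b
  have d : 1 / t ^ (p / p₁) * (1 / t ^ (p / p₂)) = 1 / t := by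
    rw [one_div_mul_one_div, ← Real.rpow_add ht, hsum, Real.rpow_one]
  rw [d] at c
  have f := sCount_le _ _ _ c
  rw [one_mul, Real.norm_of_nonneg (by positivity), Real.norm_of_nonneg (by positivity)]
  exact_mod_cast f
end
end

section
/- Let a ∈ L^∞(0,1) and let R : (0,1) × ℝ → ℂ be measurable such that for almost every y ∈ ℝ the function R(·,y) lies in the Sobolev space W¹₂(0,1) (i.e. R(·,y) ∈ L²(0,1) has a weak derivative ∂ₓR(·,y) ∈ L²(0,1)), and M² := ∫_ℝ (‖R(·,y)‖²_{L²(0,1)} + ‖∂ₓR(·,y)‖²_{L²(0,1)}) dy < ∞. Let ℜ : L²(ℝ;ℂ) → L²((0,1);ℂ) be a bounded operator with (ℜf)(x) = a(x)·∫_ℝ R(x,y) f(y) dy for every f and almost every x. Then ℜ is compact and there is a constant C (independent of R, a) such that 𝒩(t, ℜ) ≤ C·(M·‖a‖_{L^∞})^{2/3}·t^{2/3} for all t > 0. -/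
open MeasureTheory Set Filter
open scoped ENNReal NNReal Real

noncomputable section

theorem aux_greedy {E F : Type*} [NormedAddCommGroup E] [InnerProductSpace ℂ E] [CompleteSpace E]
    [NormedAddCommGroup F] [NormedSpace ℂ F] (T : E →L[ℂ] F) (h : ℝ) (hh : 0 ≤ h)
    (H : ∀ (k : ℕ) (e : Fin k → E), Orthonormal ℂ e → ∑ i, ‖T (e i)‖ ^ 2 ≤ h ^ 2) (n : ℕ) :
    ∃ G : E →L[ℂ] F, LinearMap.rank (G : E →ₗ[ℂ] F) ≤ (n : Cardinal) ∧
      ‖T - G‖ ≤ h / √((n : ℝ) + 1) := by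
  by_contra hcon
  push Not at hcon
  set c := h / √((n : ℝ) + 1) with hc
  have hc0 : 0 ≤ c := by positivity
  have key : ∀ k : ℕ, k ≤ n + 1 →
      ∃ e : Fin k → E, Orthonormal ℂ e ∧ ∀ i, c < ‖T (e i)‖ := by
    intro k
    induction k with
    | zero =>
      intro _
      exact ⟨fun i => i.elim0, ⟨fun i => i.elim0, fun i => i.elim0⟩, fun i => i.elim0⟩
    | succ k ih =>
      intro hk
      obtain ⟨e, he, hec⟩ := ih (by omega)
      let S : Submodule ℂ E := Submodule.span ℂ (Set.range e)
      have hfd : FiniteDimensional ℂ S := FiniteDimensional.span_of_finite ℂ (Set.finite_range e)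
      have hrank : LinearMap.rank ((T ∘L S.starProjection : E →L[ℂ] F) : E →ₗ[ℂ] F) ≤ (n : Cardinal) := by
        have h1 : LinearMap.range ((T ∘L S.starProjection : E →L[ℂ] F) : E →ₗ[ℂ] F)
            ≤ Submodule.span ℂ (Set.range (fun i => T (e i))) := by
          rintro _ ⟨x, rfl⟩
          have hx : S.starProjection x ∈ S := Submodule.starProjection_apply_mem S x
          have : T (S.starProjection x) ∈ S.map (T : E →ₗ[ℂ] F) := ⟨_, hx, rfl⟩
          rw [Submodule.map_span, ← Set.range_comp] at this
          exact this
        have h2 := Submodule.rank_mono h1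
        refine h2.trans ?_
        have hfd2 : FiniteDimensional ℂ (Submodule.span ℂ (Set.range (fun i => T (e i)))) :=
          FiniteDimensional.span_of_finite ℂ (Set.finite_range _)
        rw [← Module.finrank_eq_rank]
        exact_mod_cast (finrank_range_le_card (R := ℂ) (fun i => T (e i))).trans (by simp; omega)
      have hlt := hcon _ hrank
      have : ∃ x, c * ‖x‖ < ‖(T - T ∘L S.starProjection) x‖ := by
        by_contra hx
        push Not at hx
        exact absurd (ContinuousLinearMap.opNorm_le_bound _ hc0 hx) (not_le.mpr hlt)
      obtain ⟨x, hx⟩ := this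
      set v := x - S.starProjection x with hv
      have hvS : v ∈ Sᗮ := Submodule.sub_starProjection_mem_orthogonal x
      have hTv : (T - T ∘L S.starProjection) x = T v := by simp [hv]
      rw [hTv] at hx
      have hvx : ‖v‖ ≤ ‖x‖ := by
        have := Submodule.norm_starProjection_apply_le Sᗮ x
        rwa [Submodule.starProjection_orthogonal_val] at this
      have hTv2 : c * ‖v‖ < ‖T v‖ := lt_of_le_of_lt (by gcongr) hx
      have hv0 : v ≠ 0 := by
        intro h0
        rw [h0] at hTv2
        simp at hTv2
      have hvn : 0 < ‖v‖ := norm_pos_iff.mpr hv0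
      let w : E := ((‖v‖⁻¹ : ℝ) : ℂ) • v
      have hw1 : ‖w‖ = 1 := by
        simp only [w, norm_smul, Complex.norm_real, norm_inv, norm_norm]
        field_simp
      have hwT : c < ‖T w‖ := by
        simp only [w, map_smul, norm_smul, Complex.norm_real, norm_inv, norm_norm]
        rw [inv_mul_eq_div, lt_div_iff₀ hvn]
        exact hTv2
      have hwS : w ∈ Sᗮ := Submodule.smul_mem _ _ hvS
      have hwe : ∀ i, inner ℂ (e i) w = 0 := fun i =>
        (Submodule.mem_orthogonal S w).1 hwS _ (Submodule.subset_span ⟨i, rfl⟩)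
      have hew : ∀ i, inner ℂ w (e i) = 0 := fun i =>
        (Submodule.mem_orthogonal' S w).1 hwS _ (Submodule.subset_span ⟨i, rfl⟩)
      refine ⟨Fin.cons w e, ⟨?_, ?_⟩, ?_⟩
      · intro i
        refine Fin.cases ?_ (fun i => ?_) i
        · simpa using hw1
        · simpa using he.1 i
      · intro i j
        refine Fin.cases ?_ (fun i => ?_) i <;> refine Fin.cases ?_ (fun j => ?_) j
        · simp
        · simp [hew]
        · simp [hwe]
        · intro hij
          simp only [Fin.cons_succ]
          exact he.2 (fun h => hij (by rw [h]))
      · intro i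
        refine Fin.cases ?_ (fun i => ?_) i
        · simpa using hwT
        · simpa using hec i
  obtain ⟨e, he, hec⟩ := key (n + 1) le_rfl
  have h1 := H _ e he
  have h2 : ∑ i : Fin (n + 1), c ^ 2 < ∑ i : Fin (n + 1), ‖T (e i)‖ ^ 2 := by
    apply Finset.sum_lt_sum_of_nonempty Finset.univ_nonempty
    intro i _
    have := hec i
    gcongr
  have h3 : ∑ i : Fin (n + 1), c ^ 2 = h ^ 2 := by
    have : (0:ℝ) ≤ (n:ℝ) + 1 := by positivity
    simp [hc, div_pow, Real.sq_sqrt this]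
    field_simp
  linarith

theorem aux_fr_compact {E F : Type*} [NormedAddCommGroup E] [NormedSpace ℂ E]
    [NormedAddCommGroup F] [NormedSpace ℂ F] (G : E →L[ℂ] F) (n : ℕ)
    (h : LinearMap.rank (G : E →ₗ[ℂ] F) ≤ (n : Cardinal)) : IsCompactOperator (⇑G) := by
  let S := LinearMap.range (G : E →ₗ[ℂ] F)
  have hS : Module.rank ℂ S < Cardinal.aleph0 := lt_of_le_of_lt h (Cardinal.natCast_lt_aleph0)
  have hfd : FiniteDimensional ℂ S := Module.rank_lt_aleph0_iff.1 hS
  have : ProperSpace S := FiniteDimensional.proper ℂ S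
  let G1 : E →L[ℂ] S := G.codRestrict S (fun x => ⟨x, rfl⟩)
  have : IsCompactOperator (⇑(S.subtypeL ∘L G1)) := 
    (isCompactOperator_of_locallyCompactSpace_dom G1).clm_comp S.subtypeL
  exact this

theorem aux_assembly {E F : Type*} [NormedAddCommGroup E] [NormedSpace ℂ E]
    [NormedAddCommGroup F] [NormedSpace ℂ F] [CompleteSpace F] (T : E →L[ℂ] F) (D : ℝ) (hD : 0 ≤ D)
    (h0 : ∃ G : E →L[ℂ] F, LinearMap.rank (G : E →ₗ[ℂ] F) ≤ ((0 : ℕ) : Cardinal) ∧ ‖T - G‖ ≤ D)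
    (H : ∀ n : ℕ, 1 ≤ n → ∃ G : E →L[ℂ] F, LinearMap.rank (G : E →ₗ[ℂ] F) ≤ ((2 * n : ℕ) : Cardinal) ∧
      ‖T - G‖ ≤ D / (n * √(n : ℝ))) :
    IsCompactOperator (⇑T) ∧ ∀ t : ℝ, 0 < t →
      (sCount T t : ℝ) ≤ 4 * D ^ ((2:ℝ)/3) * t ^ ((2:ℝ)/3) := by
  have hs : ∀ (G : E →L[ℂ] F) (k : ℕ), LinearMap.rank (G : E →ₗ[ℂ] F) ≤ (k : Cardinal) →
      sVal T k ≤ ‖T - G‖ := by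
    intro G k hG
    apply csInf_le
    · exact ⟨0, by rintro _ ⟨G, _, rfl⟩; positivity⟩
    · exact ⟨G, hG, rfl⟩
  constructor
  · choose! G hG1 hG2 using H
    have hlim : Tendsto (fun n => G n) atTop (nhds T) := by
      rw [tendsto_iff_norm_sub_tendsto_zero]
      have hb : Tendsto (fun n : ℕ => D / (n : ℝ)) atTop (nhds 0) :=
        tendsto_const_div_atTop_nhds_zero_nat D
      refine squeeze_zero' (Eventually.of_forall fun n => norm_nonneg _) ?_ hb
      filter_upwards [eventually_ge_atTop 1] with n hn
      rw [norm_sub_rev]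
      refine (hG2 n hn).trans ?_
      have hn' : (1:ℝ) ≤ n := by exact_mod_cast hn
      have : 1 ≤ √(n:ℝ) := Real.one_le_sqrt.2 hn'
      gcongr
      nlinarith
    refine isCompactOperator_of_tendsto hlim ?_
    filter_upwards [eventually_ge_atTop 1] with n hn
    exact aux_fr_compact _ _ (hG1 n hn)
  · intro t ht
    unfold sCount
    rcases le_or_gt (D * t) 1 with hDt | hDt
    · have : {k : ℕ | 1 / t < sVal T k} = ∅ := by
        ext k
        simp only [mem_ofPred_eq, mem_empty_iff_false, iff_false, not_lt]
        obtain ⟨G, hG1, hG2⟩ := h0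
        refine (hs G k (hG1.trans (by simp))).trans ?_
        rw [le_div_iff₀ ht]
        nlinarith
      rw [this]
      simp
      positivity
    · set n := ⌈(D * t) ^ ((2:ℝ)/3)⌉₊ with hn
      have h1 : (1:ℝ) ≤ (D * t) ^ ((2:ℝ)/3) := Real.one_le_rpow hDt.le (by norm_num)
      have hn1 : 1 ≤ n := by
        rw [hn, Nat.one_le_ceil_iff]; linarith
      have hn2 : (n:ℝ) < (D * t) ^ ((2:ℝ)/3) + 1 := Nat.ceil_lt_add_one (by linarith)
      have hn3 : (D * t) ^ ((2:ℝ)/3) ≤ n := Nat.le_ceil _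
      have hn4 : D * t ≤ n * √(n:ℝ) := by
        have e1 : D * t = ((D * t) ^ ((2:ℝ)/3)) ^ ((3:ℝ)/2) := by
          rw [← Real.rpow_mul (by linarith)]; norm_num
        have e2 : (n:ℝ) * √(n:ℝ) = (n:ℝ) ^ ((3:ℝ)/2) := by
          rw [Real.sqrt_eq_rpow, show (3:ℝ)/2 = 1 + 1/2 by norm_num,
            Real.rpow_add (by exact_mod_cast hn1), Real.rpow_one]
        rw [e1, e2]
        gcongr
      obtain ⟨G, hG1, hG2⟩ := H n hn1
      have hsub : {k : ℕ | 1 / t < sVal T k} ⊆ ↑(Finset.range (2 * n)) := by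
        intro k hk
        simp only [Finset.coe_range, mem_Iio]
        by_contra hkn
        push Not at hkn
        have a1 := hs G k (hG1.trans (by exact_mod_cast hkn))
        have hn1' : (1:ℝ) ≤ n := by exact_mod_cast hn1
        have a2 : D / (n * √(n : ℝ)) ≤ 1 / t := by
          rw [div_le_div_iff₀ (by positivity) ht]
          linarith
        have a3 : 1 / t < sVal T k := hk
        linarith
      have hc := Set.ncard_le_ncard hsub (Finset.finite_toSet _)
      rw [Set.ncard_coe_finset, Finset.card_range] at hc
      have hc' : (({k : ℕ | 1 / t < sVal T k}.ncard : ℕ) : ℝ) ≤ 2 * n := by exact_mod_cast hc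
      rw [mul_assoc, ← Real.mul_rpow hD ht.le]
      linarith

theorem aux_lp_norm_sq {α : Type*} [MeasurableSpace α] {μ : Measure α} (f : Lp ℂ 2 μ) :
    ENNReal.ofReal (‖f‖ ^ 2) = ∫⁻ x, ‖(f : α → ℂ) x‖ₑ ^ 2 ∂μ := by
  have h := eLpNorm_nnreal_pow_eq_lintegral (f := (f : α → ℂ)) (μ := μ) (p := 2) (by norm_num)
  simp only [NNReal.coe_ofNat, ENNReal.coe_ofNat, ENNReal.rpow_ofNat] at h
  rw [← h, Lp.norm_def, ENNReal.ofReal_pow (by positivity),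
    ENNReal.ofReal_toReal (Lp.eLpNorm_ne_top f)]

theorem aux_memLp_two {α : Type*} [MeasurableSpace α] {μ : Measure α} {f : α → ℂ}
    (hf : AEStronglyMeasurable f μ) (h : ∫⁻ x, ‖f x‖ₑ ^ 2 ∂μ < ∞) : MemLp f 2 μ := by
  refine ⟨hf, ?_⟩
  have h2 := eLpNorm_nnreal_pow_eq_lintegral (f := f) (μ := μ) (p := 2) (by norm_num)
  simp only [NNReal.coe_ofNat, ENNReal.coe_ofNat, ENNReal.rpow_ofNat] at h2
  rw [← h2] at h
  by_contra hc
  simp only [not_lt, top_le_iff] at hc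
  simp [hc] at h

theorem aux_inner_conj {α : Type*} [MeasurableSpace α] {μ : Measure α} {k : α → ℂ}
    (hk : MemLp (fun y => (starRingEnd ℂ) (k y)) 2 μ) (f : Lp ℂ 2 μ) :
    inner ℂ (hk.toLp _) f = ∫ y, k y * (f : α → ℂ) y ∂μ := by
  rw [L2.inner_def]
  apply integral_congr_ae
  filter_upwards [hk.coeFn_toLp] with y hy
  rw [hy]
  simp [mul_comm]

theorem aux_conj_memLp {α : Type*} [MeasurableSpace α] {μ : Measure α} {k : α → ℂ}
    (hk : MemLp k 2 μ) : MemLp (fun y => (starRingEnd ℂ) (k y)) 2 μ := hk.star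

theorem aux_HS {α β : Type*} [MeasurableSpace α] [MeasurableSpace β] {μ : Measure α}
    {ν : Measure β} [SFinite ν] (a : α → ℂ) (K : α → β → ℂ)
    (hK : Measurable (Function.uncurry K)) (ha : eLpNorm a ⊤ μ < ⊤) (h : ℝ) (hh : 0 ≤ h)
    (hKh : ∫⁻ x, ∫⁻ y, ‖K x y‖ₑ ^ 2 ∂ν ∂μ ≤ ENNReal.ofReal (h ^ 2))
    (T : Lp ℂ 2 ν →L[ℂ] Lp ℂ 2 μ)
    (hT : ∀ f : Lp ℂ 2 ν, ∀ᵐ x ∂μ, (T f : α → ℂ) x = a x * ∫ y, K x y * (f : β → ℂ) y ∂ν)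
    (k : ℕ) (e : Fin k → Lp ℂ 2 ν) (he : Orthonormal ℂ e) :
    ∑ i, ‖T (e i)‖ ^ 2 ≤ (h * (eLpNorm a ⊤ μ).toReal) ^ 2 := by
  have hmeas : Measurable (fun x => ∫⁻ y, ‖K x y‖ₑ ^ 2 ∂ν) :=
    Measurable.lintegral_prod_right' (f := fun p : α × β => ‖Function.uncurry K p‖ₑ ^ 2)
      (hK.enorm.pow_const 2)
  have hfin : ∀ᵐ x ∂μ, ∫⁻ y, ‖K x y‖ₑ ^ 2 ∂ν < ∞ :=
    ae_lt_top hmeas (ne_top_of_le_ne_top ENNReal.ofReal_ne_top hKh)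
  have hA : ∀ᵐ x ∂μ, ‖a x‖ₑ ≤ eLpNorm a ⊤ μ := by
    rw [eLpNorm_exponent_top]; exact enorm_ae_le_eLpNormEssSup a μ
  have hT' : ∀ᵐ x ∂μ, ∀ i, (T (e i) : α → ℂ) x = a x * ∫ y, K x y * (e i : β → ℂ) y ∂ν :=
    ae_all_iff.2 fun i => hT (e i)
  have hpt : ∀ᵐ x ∂μ, ∑ i, ‖(T (e i) : α → ℂ) x‖ₑ ^ 2 ≤
      (eLpNorm a ⊤ μ) ^ 2 * ∫⁻ y, ‖K x y‖ₑ ^ 2 ∂ν := by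
    filter_upwards [hfin, hA, hT'] with x h1 h2 h3
    have hm : MemLp (K x) 2 ν :=
      aux_memLp_two (hK.comp measurable_prodMk_left).aestronglyMeasurable h1
    have hc := aux_conj_memLp hm
    have hB := he.sum_inner_products_le (hc.toLp _) (s := Finset.univ)
    have hB2 : ∑ i, ‖∫ y, K x y * (e i : β → ℂ) y ∂ν‖ₑ ^ 2 ≤ ∫⁻ y, ‖K x y‖ₑ ^ 2 ∂ν := by
      have e1 : ∫⁻ y, ‖K x y‖ₑ ^ 2 ∂ν = ENNReal.ofReal (‖hc.toLp _‖ ^ 2) := by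
        rw [aux_lp_norm_sq]
        apply lintegral_congr_ae
        filter_upwards [hc.coeFn_toLp] with y hy
        rw [hy]; simp [enorm_eq_nnnorm]
      rw [e1]
      refine le_trans (le_of_eq ?_) (ENNReal.ofReal_le_ofReal hB)
      rw [ENNReal.ofReal_sum_of_nonneg (fun _ _ => by positivity)]
      refine Finset.sum_congr rfl fun i _ => ?_
      rw [← aux_inner_conj hc, norm_inner_symm, ENNReal.ofReal_pow (by positivity),
        ofReal_norm]
    calc ∑ i, ‖(T (e i) : α → ℂ) x‖ₑ ^ 2
        = ‖a x‖ₑ ^ 2 * ∑ i, ‖∫ y, K x y * (e i : β → ℂ) y ∂ν‖ₑ ^ 2 := by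
          rw [Finset.mul_sum]
          refine Finset.sum_congr rfl fun i _ => ?_
          rw [h3 i, enorm_mul, mul_pow]
      _ ≤ _ := by gcongr
  have hAf : ENNReal.ofReal ((eLpNorm a ⊤ μ).toReal) = eLpNorm a ⊤ μ := ENNReal.ofReal_toReal ha.ne
  have hfinal : ENNReal.ofReal (∑ i, ‖T (e i)‖ ^ 2) ≤
      ENNReal.ofReal ((h * (eLpNorm a ⊤ μ).toReal) ^ 2) := by
    rw [ENNReal.ofReal_sum_of_nonneg (fun _ _ => by positivity)]
    simp_rw [aux_lp_norm_sq]
    rw [← lintegral_finsetSum']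
    · refine (lintegral_mono_ae hpt).trans ?_
      rw [lintegral_const_mul _ hmeas, mul_comm h, mul_pow, ENNReal.ofReal_mul (by positivity),
        ENNReal.ofReal_pow (by positivity), hAf]
      gcongr
    · intro i _
      exact ((Lp.aestronglyMeasurable (T (e i))).enorm.pow_const 2)
  exact (ENNReal.ofReal_le_ofReal_iff (by positivity)).1 hfinal

theorem aux_cs {α : Type*} [MeasurableSpace α] {μ : Measure α} {f : α → ℂ}
    (hf : AEStronglyMeasurable f μ) :
    (∫⁻ x, ‖f x‖ₑ ∂μ) ^ 2 ≤ μ univ * ∫⁻ x, ‖f x‖ₑ ^ 2 ∂μ := by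
  have h := ENNReal.lintegral_mul_le_Lp_mul_Lq μ Real.HolderConjugate.two_two
    (f := fun _ => 1) (g := fun x => ‖f x‖ₑ) aemeasurable_const hf.enorm
  simp only [Pi.mul_apply, one_mul, ENNReal.rpow_ofNat, one_pow, lintegral_one] at h
  calc _ ≤ (μ univ ^ (1 / (2:ℝ)) * (∫⁻ x, ‖f x‖ₑ ^ 2 ∂μ) ^ (1 / (2:ℝ))) ^ 2 := by gcongr
    _ = _ := by
      rw [mul_pow, ← ENNReal.rpow_natCast, ← ENNReal.rpow_natCast, ← ENNReal.rpow_mul,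
        ← ENNReal.rpow_mul]
      norm_num

theorem aux_poincare (r r' : ℝ → ℂ) (p q : ℝ) (hp : 0 ≤ p) (hpq : p < q) (hq : q ≤ 1) (c : ℂ)
    (hr : IntegrableOn r (Ioc 0 1)) (hr' : IntegrableOn r' (Ioc 0 1))
    (hc : ∀ᵐ x ∂(volume.restrict (Ioc (0:ℝ) 1)), r x = c + ∫ u in (1/2:ℝ)..x, r' u) :
    ∫⁻ x in Ioc p q, ‖r x - ((q - p : ℝ) : ℂ)⁻¹ * ∫ u in Ioc p q, r u‖ₑ ^ 2 ≤
      ENNReal.ofReal ((q - p) ^ 2) * ∫⁻ x in Ioc p q, ‖r' x‖ₑ ^ 2 := by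
  have hsub : Ioc p q ⊆ Ioc (0:ℝ) 1 := Ioc_subset_Ioc hp hq
  have hqp : 0 < q - p := by linarith
  have hc' := ae_restrict_of_ae_restrict_of_subset hsub hc
  have hrI := hr.mono_set hsub
  have hrI' := hr'.mono_set hsub
  set B := ∫ u in Ioc p q, ‖r' u‖ with hB
  have hdiff : ∀ x ∈ Ioc p q, ∀ u ∈ Ioc p q,
      ‖(∫ u in (1/2:ℝ)..x, r' u) - ∫ u in (1/2:ℝ)..u, r' u‖ ≤ B := by
    intro x hx u hu
    have hi : ∀ z ∈ Ioc (0:ℝ) 1, IntervalIntegrable r' volume (1/2) z := by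
      intro z hz
      rw [intervalIntegrable_iff]
      refine hr'.mono_set ?_
      intro w hw
      rw [uIoc, mem_Ioc] at hw
      have h1 : (0:ℝ) ≤ min (1/2) z := le_min (by norm_num) hz.1.le
      have h2 : max (1/2:ℝ) z ≤ 1 := max_le (by norm_num) hz.2
      exact ⟨lt_of_le_of_lt h1 hw.1, hw.2.trans h2⟩
    rw [intervalIntegral.integral_interval_sub_left (hi x (hsub hx)) (hi u (hsub hu))]
    refine intervalIntegral.norm_integral_le_integral_norm_uIoc.trans ?_
    apply setIntegral_mono_set hrI'.norm
    · exact Eventually.of_forall fun _ => norm_nonneg _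
    · refine LE.le.eventuallyLE ?_
      intro w hw
      rw [uIoc, mem_Ioc] at hw
      exact ⟨lt_of_le_of_lt (le_min hu.1.le hx.1.le) hw.1, hw.2.trans (max_le hu.2 hx.2)⟩
  have hvol : (volume (Ioc p q)) = ENNReal.ofReal (q - p) := Real.volume_Ioc
  have hpt : ∀ᵐ x ∂(volume.restrict (Ioc p q)),
      ‖r x - ((q - p : ℝ) : ℂ)⁻¹ * ∫ u in Ioc p q, r u‖ ≤ B := by
    filter_upwards [hc', ae_restrict_mem measurableSet_Ioc] with x hx hxm
    have e1 : r x - ((q - p : ℝ) : ℂ)⁻¹ * ∫ u in Ioc p q, r u =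
        ((q - p : ℝ) : ℂ)⁻¹ * ∫ u in Ioc p q, (r x - r u) := by
      rw [integral_sub (integrable_const _) hrI]
      have : ((q - p : ℝ) : ℂ) ≠ 0 := by exact_mod_cast hqp.ne'
      simp only [setIntegral_const, Measure.real, hvol, ENNReal.toReal_ofReal hqp.le,
        Complex.real_smul]
      field_simp
    have e2 : ‖∫ u in Ioc p q, (r x - r u)‖ ≤ B * (volume (Ioc p q)).toReal := by
      refine norm_setIntegral_le_of_norm_le_const_ae (by simp) ?_
      filter_upwards [hc', ae_restrict_mem measurableSet_Ioc] with u hu hum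
      rw [hx, hu, add_sub_add_left_eq_sub]
      exact hdiff x hxm u hum
    rw [hvol, ENNReal.toReal_ofReal hqp.le] at e2
    rw [e1, norm_mul, norm_inv, Complex.norm_real, Real.norm_of_nonneg hqp.le, inv_mul_eq_div,
      div_le_iff₀ hqp]
    exact e2
  have hBe : ENNReal.ofReal B = ∫⁻ u in Ioc p q, ‖r' u‖ₑ := by
    rw [hB, ofReal_integral_norm_eq_lintegral_enorm hrI']
  have hcs := aux_cs hrI'.aestronglyMeasurable
  rw [Measure.restrict_apply_univ, hvol, ← hBe] at hcs
  calc ∫⁻ x in Ioc p q, ‖r x - ((q - p : ℝ) : ℂ)⁻¹ * ∫ u in Ioc p q, r u‖ₑ ^ 2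
      ≤ ∫⁻ x in Ioc p q, (ENNReal.ofReal (q - p) * ∫⁻ x in Ioc p q, ‖r' x‖ₑ ^ 2) := by
        refine lintegral_mono_ae ?_
        filter_upwards [hpt] with x hx
        refine le_trans ?_ hcs
        rw [← ofReal_norm]
        gcongr
    _ = _ := by
        rw [setLIntegral_const, hvol, ENNReal.ofReal_pow hqp.le]
        ring

def auxI (n : ℕ) (j : Fin n) : Set ℝ := Ioc ((j:ℝ) / n) (((j:ℝ) + 1) / n)

def auxg (R : ℝ → ℝ → ℂ) (n : ℕ) (j : Fin n) (y : ℝ) : ℂ :=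
  (((((j:ℝ) + 1) / n - (j:ℝ) / n : ℝ)) : ℂ)⁻¹ * ∫ u in auxI n j, R u y

def auxK (R : ℝ → ℝ → ℂ) (n : ℕ) (x y : ℝ) : ℂ :=
  R x y - ∑ j : Fin n, (auxI n j).indicator 1 x * auxg R n j y

theorem auxI_meas (n : ℕ) (j : Fin n) : MeasurableSet (auxI n j) := measurableSet_Ioc

theorem auxI_disj (n : ℕ) : Pairwise (Function.onFun Disjoint (auxI n)) := by
  have key : ∀ i j : Fin n, i < j → Disjoint (auxI n i) (auxI n j) := by
    intro i j hij
    rw [Set.disjoint_left]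
    intro x hx hx'
    have h1 : ((i:ℝ) + 1) / n ≤ (j:ℝ) / n := by
      have : ((i:ℕ):ℝ) + 1 ≤ (j:ℕ) := by exact_mod_cast hij
      gcongr
    exact absurd (hx.2.trans h1) (not_le.mpr hx'.1)
  intro i j hij
  rcases lt_or_gt_of_ne hij with h | h
  · exact key i j h
  · exact (key j i h).symm

theorem auxI_sub (n : ℕ) (j : Fin n) : auxI n j ⊆ Ioc 0 1 := by
  have hj : (j:ℕ) + 1 ≤ n := j.2
  have hj' : ((j:ℕ):ℝ) + 1 ≤ n := by exact_mod_cast hj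
  have : (0:ℝ) < n := by exact_mod_cast (by omega : 0 < n)
  apply Ioc_subset_Ioc
  · positivity
  · rwa [div_le_one this]

theorem auxI_union (n : ℕ) (hn : 1 ≤ n) : Ioc (0:ℝ) 1 = ⋃ j, auxI n j := by
  have hn0 : (0:ℝ) < n := by exact_mod_cast hn
  apply Set.Subset.antisymm
  · intro x hx
    rw [mem_iUnion]
    have h0 : 0 < n * x := mul_pos hn0 hx.1
    have hc1 : 0 < ⌈n * x⌉₊ := Nat.ceil_pos.2 h0
    have hc2 : ⌈n * x⌉₊ ≤ n := Nat.ceil_le.2 (by nlinarith [hx.2])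
    have hc3 : (⌈n * x⌉₊ : ℝ) < n * x + 1 := Nat.ceil_lt_add_one h0.le
    have hc4 : n * x ≤ (⌈n * x⌉₊ : ℝ) := Nat.le_ceil _
    refine ⟨⟨⌈n * x⌉₊ - 1, by omega⟩, ?_⟩
    have e : ((⌈n * x⌉₊ - 1 : ℕ) : ℝ) = (⌈n * x⌉₊ : ℝ) - 1 := by
      rw [Nat.cast_sub hc1]; simp
    constructor
    · simp only [e]
      rw [div_lt_iff₀ hn0]
      linarith
    · simp only [e]
      rw [le_div_iff₀ hn0]
      linarith
  · exact iUnion_subset fun j => auxI_sub n j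

theorem auxI_lint (n : ℕ) (hn : 1 ≤ n) (f : ℝ → ℝ≥0∞) :
    ∫⁻ x in Ioc 0 1, f x = ∑ j, ∫⁻ x in auxI n j, f x := by
  rw [auxI_union n hn, lintegral_iUnion (auxI_meas n) (auxI_disj n), tsum_fintype]

theorem auxK_on (R : ℝ → ℝ → ℂ) (n : ℕ) (j : Fin n) (x y : ℝ) (hx : x ∈ auxI n j) :
    auxK R n x y = R x y - auxg R n j y := by
  unfold auxK
  rw [Finset.sum_eq_single j]
  · simp [hx]
  · intro i _ hij
    have : x ∉ auxI n i := fun h => (Set.disjoint_left.1 (auxI_disj n hij)) h hx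
    simp [this]
  · simp

theorem auxg_meas (R : ℝ → ℝ → ℂ) (hR : Measurable (Function.uncurry R)) (n : ℕ) (j : Fin n) :
    Measurable (auxg R n j) :=
  (hR.stronglyMeasurable.integral_prod_left.measurable).const_mul _

theorem auxK_meas (R : ℝ → ℝ → ℂ) (hR : Measurable (Function.uncurry R)) (n : ℕ) :
    Measurable (Function.uncurry (auxK R n)) := by
  refine hR.sub (Finset.measurable_sum _ fun j _ => ?_)
  refine Measurable.mul ?_ ((auxg_meas R hR n j).comp measurable_snd)
  exact (measurable_one.indicator (auxI_meas n j)).comp measurable_fst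

theorem auxK_est (R R' : ℝ → ℝ → ℂ) (n : ℕ) (hn : 1 ≤ n) (y : ℝ) (c : ℂ)
    (hr : IntegrableOn (fun x => R x y) (Ioc 0 1)) (hr' : IntegrableOn (fun x => R' x y) (Ioc 0 1))
    (hc : ∀ᵐ x ∂(volume.restrict (Ioc (0:ℝ) 1)), R x y = c + ∫ u in (1/2:ℝ)..x, R' u y) :
    ∫⁻ x in Ioc 0 1, ‖auxK R n x y‖ₑ ^ 2 ≤
      ENNReal.ofReal ((1 / (n:ℝ)) ^ 2) * ∫⁻ x in Ioc 0 1, ‖R' x y‖ₑ ^ 2 := by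
  have hn0 : (0:ℝ) < n := by exact_mod_cast hn
  rw [auxI_lint n hn, auxI_lint n hn, Finset.mul_sum]
  refine Finset.sum_le_sum fun j _ => ?_
  have hj : (j:ℕ) + 1 ≤ n := j.2
  have hj' : ((j:ℕ):ℝ) + 1 ≤ n := by exact_mod_cast hj
  have h := aux_poincare (fun x => R x y) (fun x => R' x y) ((j:ℝ) / n) (((j:ℝ) + 1) / n)
    (by positivity) (by gcongr; linarith) (by rwa [div_le_one hn0]) c hr hr' hc
  have e : (((j:ℝ) + 1) / n - (j:ℝ) / n) ^ 2 = (1 / (n:ℝ)) ^ 2 := by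
    congr 1; field_simp; ring
  rw [e] at h
  refine le_trans (le_of_eq ?_) h
  refine setLIntegral_congr_fun (auxI_meas n j) fun x hx => ?_
  rw [auxK_on R n j x y hx]
  rfl

theorem auxg_memLp (R : ℝ → ℝ → ℂ) (hR : Measurable (Function.uncurry R)) (n : ℕ) (j : Fin n)
    (hfin : ∫⁻ y, ∫⁻ x in Ioc 0 1, ‖R x y‖ₑ ^ 2 < ∞) : MemLp (auxg R n j) 2 volume := by
  apply MemLp.const_mul
  refine aux_memLp_two hR.stronglyMeasurable.integral_prod_left.aestronglyMeasurable ?_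
  refine lt_of_le_of_lt (lintegral_mono (g := fun y => 1 * ∫⁻ x in Ioc 0 1, ‖R x y‖ₑ ^ 2)
    fun y => ?_) (by simpa using hfin)
  have hm : Measurable (fun x => R x y) := hR.comp measurable_prodMk_right
  have h1 : ‖∫ x in auxI n j, R x y‖ₑ ^ 2 ≤ (∫⁻ x in auxI n j, ‖R x y‖ₑ) ^ 2 := by
    gcongr
    exact enorm_integral_le_lintegral_enorm _
  refine h1.trans ((aux_cs hm.aestronglyMeasurable).trans ?_)
  have hs := auxI_sub n j
  refine mul_le_mul' ?_ (lintegral_mono_set hs)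
  rw [Measure.restrict_apply_univ]
  exact (measure_mono hs).trans (by simp)

theorem aux_core (μ : Measure ℝ) (hμ : μ = volume.restrict (Ioc (0:ℝ) 1))
    (a : ℝ → ℂ) (R R' : ℝ → ℝ → ℂ) (M : ℝ) (hM : 0 ≤ M)
    (hR : Measurable (Function.uncurry R)) (hR' : Measurable (Function.uncurry R'))
    (ham : AEStronglyMeasurable a μ) (ha : eLpNorm a ⊤ μ < ⊤)
    (hy : ∀ᵐ y : ℝ, MemLp (fun x => R x y) 2 μ ∧ MemLp (fun x => R' x y) 2 μ ∧
          Integrable (fun x => R' x y) μ ∧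
          ∃ c : ℂ, ∀ᵐ x ∂μ, R x y = c + ∫ u in (1/2:ℝ)..x, R' u y)
    (hI : Integrable (fun y : ℝ => (∫ x, ‖R x y‖^2 ∂μ) + ∫ x, ‖R' x y‖^2 ∂μ))
    (hIM : (∫ y : ℝ, ((∫ x, ‖R x y‖^2 ∂μ) + ∫ x, ‖R' x y‖^2 ∂μ)) = M^2)
    (Rop : Lp ℂ 2 (volume : Measure ℝ) →L[ℂ] Lp ℂ 2 μ)
    (hop : ∀ f : Lp ℂ 2 (volume : Measure ℝ), ∀ᵐ x ∂μ,
              (Rop f : ℝ → ℂ) x = a x * ∫ y : ℝ, R x y * (f : ℝ → ℂ) y) :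
    IsCompactOperator (⇑Rop) ∧ ∀ t : ℝ, 0 < t →
      (sCount Rop t : ℝ) ≤ 4 * (M * (eLpNorm a ⊤ μ).toReal) ^ ((2:ℝ)/3) * t ^ ((2:ℝ)/3) := by
  have hμf : IsFiniteMeasure μ := by rw [hμ]; infer_instance
  have hsq : ∀ f : ℝ → ℂ, MemLp f 2 μ →
      ENNReal.ofReal (∫ x, ‖f x‖ ^ 2 ∂μ) = ∫⁻ x, ‖f x‖ₑ ^ 2 ∂μ := by
    intro f hf
    rw [ofReal_integral_eq_lintegral_ofReal (MemLp.integrable_norm_pow (p := 2) hf (by norm_num))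
      (Eventually.of_forall fun _ => by positivity)]
    refine lintegral_congr fun x => ?_
    rw [ENNReal.ofReal_pow (by positivity), ofReal_norm]
  have hL : ∫⁻ y, ((∫⁻ x, ‖R x y‖ₑ ^ 2 ∂μ) + ∫⁻ x, ‖R' x y‖ₑ ^ 2 ∂μ) =
      ENNReal.ofReal (M ^ 2) := by
    rw [← hIM, ofReal_integral_eq_lintegral_ofReal hI (Eventually.of_forall fun _ => by positivity)]
    refine lintegral_congr_ae ?_
    filter_upwards [hy] with y h
    rw [ENNReal.ofReal_add (by positivity) (by positivity), hsq _ h.1, hsq _ h.2.1]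
  have hLR : ∫⁻ y, (∫⁻ x, ‖R x y‖ₑ ^ 2 ∂μ) ≤ ENNReal.ofReal (M ^ 2) :=
    hL ▸ lintegral_mono fun y => le_self_add
  have hLR' : ∫⁻ y, (∫⁻ x, ‖R' x y‖ₑ ^ 2 ∂μ) ≤ ENNReal.ofReal (M ^ 2) :=
    hL ▸ lintegral_mono fun y => le_add_self
  have hswap : ∀ K : ℝ → ℝ → ℂ, Measurable (Function.uncurry K) →
      ∫⁻ x, ∫⁻ y, ‖K x y‖ₑ ^ 2 ∂volume ∂μ = ∫⁻ y, ∫⁻ x, ‖K x y‖ₑ ^ 2 ∂μ := fun K hK =>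
    lintegral_lintegral_swap (hK.enorm.pow_const 2).aemeasurable
  have hRx := (hswap R hR).trans_le hLR
  have hRfin : ∀ᵐ x ∂μ, MemLp (R x) 2 (volume : Measure ℝ) := by
    have hmeas : Measurable (fun x => ∫⁻ y, ‖R x y‖ₑ ^ 2) :=
      Measurable.lintegral_prod_right' (f := fun p : ℝ × ℝ => ‖Function.uncurry R p‖ₑ ^ 2)
        (hR.enorm.pow_const 2)
    filter_upwards [ae_lt_top hmeas (ne_top_of_le_ne_top ENNReal.ofReal_ne_top hRx)] with x hx
    exact aux_memLp_two (hR.comp measurable_prodMk_left).aestronglyMeasurable hx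
  set A := (eLpNorm a ⊤ μ).toReal with hA
  have hA0 : 0 ≤ A := ENNReal.toReal_nonneg
  refine aux_assembly Rop (M * A) (by positivity) ?_ ?_
  · have := aux_greedy Rop (M * A) (by positivity)
      (aux_HS a R hR ha M hM hRx Rop hop) 0
    simpa using this
  intro n hn
  have hn0 : (0:ℝ) < n := by exact_mod_cast hn
  have ha2 : MemLp a 2 μ := MemLp.mono_exponent ⟨ham, ha⟩ le_top
  have hb : ∀ j : Fin n, MemLp ((auxI n j).indicator a) 2 μ := fun j => ha2.indicator (auxI_meas n j)
  have hg : ∀ j : Fin n, MemLp (auxg R n j) 2 (volume : Measure ℝ) := fun j =>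
    auxg_memLp R hR n j (by rw [← hμ]; exact lt_of_le_of_lt hLR ENNReal.ofReal_lt_top)
  let G : Lp ℂ 2 (volume : Measure ℝ) →L[ℂ] Lp ℂ 2 μ :=
    ∑ j : Fin n, (innerSL ℂ ((aux_conj_memLp (hg j)).toLp _)).smulRight ((hb j).toLp _)
  have hGf : ∀ f, G f = ∑ j : Fin n, (∫ y, auxg R n j y * (f : ℝ → ℂ) y) • ((hb j).toLp _) := by
    intro f
    simp only [G, ContinuousLinearMap.sum_apply, ContinuousLinearMap.smulRight_apply,
      innerSL_apply_apply]
    refine Finset.sum_congr rfl fun j _ => ?_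
    rw [aux_inner_conj]
  have hGrank : LinearMap.rank (G : Lp ℂ 2 (volume : Measure ℝ) →ₗ[ℂ] Lp ℂ 2 μ) ≤ (n : Cardinal) := by
    have h1 : LinearMap.range (G : Lp ℂ 2 (volume : Measure ℝ) →ₗ[ℂ] Lp ℂ 2 μ)
        ≤ Submodule.span ℂ (Set.range (fun j => (hb j).toLp _)) := by
      rintro _ ⟨f, rfl⟩
      have : G f ∈ Submodule.span ℂ (Set.range (fun j => (hb j).toLp _)) := by
        rw [hGf]
        exact Submodule.sum_mem _ fun j _ =>
          Submodule.smul_mem _ _ (Submodule.subset_span ⟨j, rfl⟩)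
      exact this
    refine (Submodule.rank_mono h1).trans ?_
    have hfd2 : FiniteDimensional ℂ (Submodule.span ℂ (Set.range (fun j => (hb j).toLp _))) :=
      FiniteDimensional.span_of_finite ℂ (Set.finite_range _)
    rw [← Module.finrank_eq_rank]
    exact_mod_cast (finrank_range_le_card (R := ℂ) (fun j => (hb j).toLp _)).trans (by simp)
  have hTop : ∀ f : Lp ℂ 2 (volume : Measure ℝ), ∀ᵐ x ∂μ,
      ((Rop - G) f : ℝ → ℂ) x = a x * ∫ y : ℝ, auxK R n x y * (f : ℝ → ℂ) y := by
    intro f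
    have hb' : ∀ᵐ x ∂μ, ∀ j : Fin n, ((hb j).toLp _ : ℝ → ℂ) x = (auxI n j).indicator a x :=
      ae_all_iff.2 fun j => (hb j).coeFn_toLp
    have hs' : ∀ᵐ x ∂μ, ∀ j : Fin n,
        (((∫ y, auxg R n j y * (f : ℝ → ℂ) y) • ((hb j).toLp _) : Lp ℂ 2 μ) : ℝ → ℂ) x =
        (∫ y, auxg R n j y * (f : ℝ → ℂ) y) • ((hb j).toLp _ : ℝ → ℂ) x :=
      ae_all_iff.2 fun j => Lp.coeFn_smul _ _
    have hsum := Lp.coeFn_finsetSum Finset.univ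
      (fun j : Fin n => (∫ y, auxg R n j y * (f : ℝ → ℂ) y) • ((hb j).toLp _))
    rw [← hGf] at hsum
    rw [ContinuousLinearMap.sub_apply]
    filter_upwards [hop f, hRfin, hb', hs', hsum, Lp.coeFn_sub (Rop f) (G f)]
      with x h1 h2 h3 h4 h5 h6
    have hf : MemLp (f : ℝ → ℂ) 2 (volume : Measure ℝ) := Lp.memLp f
    have i1 : Integrable (fun y => R x y * (f : ℝ → ℂ) y) := h2.integrable_mul hf
    have i2 : ∀ j, Integrable (fun y => auxg R n j y * (f : ℝ → ℂ) y) :=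
      fun j => (hg j).integrable_mul hf
    have e : ∫ y : ℝ, auxK R n x y * (f : ℝ → ℂ) y = (∫ y, R x y * (f : ℝ → ℂ) y) -
        ∑ j : Fin n, (auxI n j).indicator 1 x * ∫ y, auxg R n j y * (f : ℝ → ℂ) y := by
      simp_rw [← integral_const_mul]
      rw [← integral_finsetSum _ (fun j _ => (i2 j).const_mul _),
        ← integral_sub i1 (integrable_finsetSum _ fun j _ => (i2 j).const_mul _)]
      refine integral_congr_ae (Eventually.of_forall fun y => ?_)
      simp only [auxK, sub_mul, Finset.sum_mul, mul_assoc]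
    rw [h6, Pi.sub_apply, h1, h5, e, mul_sub, Finset.mul_sum]
    congr 1
    rw [Finset.sum_apply]
    refine Finset.sum_congr rfl fun j _ => ?_
    rw [h4 j, h3 j]
    by_cases hx : x ∈ auxI n j
    · simp [hx, mul_comm]
    · simp [hx]
  have hKest : ∫⁻ x, ∫⁻ y, ‖auxK R n x y‖ₑ ^ 2 ∂volume ∂μ ≤ ENNReal.ofReal ((1 / (n:ℝ) * M) ^ 2) := by
    rw [hswap _ (auxK_meas R hR n), mul_pow, ENNReal.ofReal_mul (by positivity)]
    refine le_trans (lintegral_mono_ae (g := fun y => ENNReal.ofReal ((1 / (n:ℝ)) ^ 2) *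
      ∫⁻ x, ‖R' x y‖ₑ ^ 2 ∂μ) ?_) ?_
    · filter_upwards [hy] with y ⟨k1, k2, k3, c, k4⟩
      have k1' := k1.integrable (by norm_num)
      rw [hμ] at k1' k3 k4 ⊢
      exact auxK_est R R' n hn y c k1' k3 k4
    · rw [lintegral_const_mul' _ _ ENNReal.ofReal_ne_top]
      gcongr
  obtain ⟨F, hF1, hF2⟩ := aux_greedy (Rop - G) (1 / (n:ℝ) * M * A) (by positivity)
    (aux_HS a (auxK R n) (auxK_meas R hR n) ha (1 / (n:ℝ) * M) (by positivity) hKest (Rop - G) hTop) n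
  refine ⟨G + F, ?_, ?_⟩
  · refine (LinearMap.rank_add_le _ _).trans ?_
    push_cast
    rw [two_mul]
    gcongr
  · rw [← sub_sub]
    refine hF2.trans ?_
    have : √(n:ℝ) ≤ √((n:ℝ) + 1) := Real.sqrt_le_sqrt (by linarith)
    have hs0 : 0 < √(n:ℝ) := Real.sqrt_pos.2 hn0
    calc 1 / (n:ℝ) * M * A / √((n:ℝ) + 1) ≤ 1 / (n:ℝ) * M * A / √(n:ℝ) := by gcongr
      _ = _ := by field_simp

/-- Counting-function bound for an integral operator whose kernel lies in
`L²(ℝ_y; W¹₂((0,1)_x))`, with a bounded multiplier `a`.  The weak derivative of the kernel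
in `x` is encoded by `R'` together with the Newton–Leibniz representation.  The constant
`C` is universal (independent of the kernel and the multiplier). -/
theorem integral_operator_W12_kernel_counting_bound :
    ∃ C : ℝ, 0 < C ∧
      ∀ (a : ℝ → ℂ) (R R' : ℝ → ℝ → ℂ) (M : ℝ), 0 ≤ M →
        Measurable (Function.uncurry R) → Measurable (Function.uncurry R') →
        AEStronglyMeasurable a (volume.restrict (Ioo (0:ℝ) 1)) →
        eLpNorm a ⊤ (volume.restrict (Ioo (0:ℝ) 1)) < ⊤ →
        -- for a.e. y, R(·,y) ∈ W¹₂(0,1) with weak derivative R'(·,y)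
        (∀ᵐ y : ℝ, MemLp (fun x => R x y) 2 (volume.restrict (Ioo (0:ℝ) 1)) ∧
          MemLp (fun x => R' x y) 2 (volume.restrict (Ioo (0:ℝ) 1)) ∧
          IntegrableOn (fun x => R' x y) (Ioo (0:ℝ) 1) ∧
          ∃ c : ℂ, ∀ᵐ x ∂(volume.restrict (Ioo (0:ℝ) 1)),
            R x y = c + ∫ u in (1/2:ℝ)..x, R' u y) →
        Integrable (fun y : ℝ =>
          (∫ x in Ioo (0:ℝ) 1, ‖R x y‖^2) + ∫ x in Ioo (0:ℝ) 1, ‖R' x y‖^2) →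
        (∫ y : ℝ, ((∫ x in Ioo (0:ℝ) 1, ‖R x y‖^2) + ∫ x in Ioo (0:ℝ) 1, ‖R' x y‖^2))
          = M^2 →
        ∀ Rop : Lp ℂ 2 (volume : Measure ℝ) →L[ℂ] Lp ℂ 2 (volume.restrict (Ioo (0:ℝ) 1)),
          (∀ f : Lp ℂ 2 (volume : Measure ℝ),
            ∀ᵐ x ∂(volume.restrict (Ioo (0:ℝ) 1)),
              (Rop f : ℝ → ℂ) x = a x * ∫ y : ℝ, R x y * (f : ℝ → ℂ) y) →
          IsCompactOperator (⇑Rop) ∧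
          ∀ t : ℝ, 0 < t →
            (sCount Rop t : ℝ) ≤
              C * (M * (eLpNorm a ⊤ (volume.restrict (Ioo (0:ℝ) 1))).toReal) ^ ((2:ℝ)/3)
                * t ^ ((2:ℝ)/3) := by
  refine ⟨4, by norm_num, ?_⟩
  intro a R R' M hM hR hR' ham ha hy hI hIM Rop hop
  exact aux_core _ restrict_Ioo_eq_restrict_Ioc a R R' M hM hR hR' ham ha hy hI hIM Rop hop
end
end

section
/- Let H : [0,1] → ℝ be continuous with 0 < H(x) < 1; set H_min := min_{[0,1]} H, h := H − H_min, D := {x ∈ [0,1] : h(x) = 0}, 𝔪 := H_min + 1/2. Assume there are σ, s₀ > 0 and a slowly varying function φ such that Leb{x ∈ [0,1] : 0 < h(x) < s} = s^σ·φ(1/s) for all 0 < s < s₀. Then, as t → ∞, (∫₀¹ t^{1/(H(x)+1/2)} dx − t^{1/𝔪}·Leb(D)) / (t^{1/𝔪} · 𝔪^{2σ} · Γ(σ+1) · (log t)^{−σ} · φ(log t)) → 1. -/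
open MeasureTheory Set Filter
open scoped ENNReal NNReal Real

noncomputable section

lemma aux_layer {α : Type*} [MeasurableSpace α] (μ : Measure α) [IsFiniteMeasure μ]
    (g : α → ℝ) (hg : Measurable g) (hg0 : ∀ᵐ x ∂μ, 0 ≤ g x) :
    ∫ x, Real.exp (-g x) ∂μ = ∫ u in Ioi (0:ℝ), Real.exp (-u) * μ.real {x | g x < u} := by
  have hS : MeasurableSet {p : α × ℝ | g p.1 < p.2} :=
    measurableSet_lt (hg.comp measurable_fst) measurable_snd
  have hint : Integrable (fun p : α × ℝ =>
      ({p : α × ℝ | g p.1 < p.2}).indicator (fun p => Real.exp (-p.2)) p)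
      (μ.prod (volume.restrict (Ioi (0:ℝ)))) := by
    refine Integrable.indicator ?_ hS
    have h1 : Integrable (fun u : ℝ => Real.exp (-u)) (volume.restrict (Ioi (0:ℝ))) :=
      integrableOn_exp_neg_Ioi 0
    exact h1.comp_snd μ
  have hswap := integral_integral_swap (f := fun (x : α) (u : ℝ) =>
    ({p : α × ℝ | g p.1 < p.2}).indicator (fun p => Real.exp (-p.2)) (x, u)) hint
  have hL : ∫ x, Real.exp (-g x) ∂μ = ∫ x, (∫ u in Ioi (0:ℝ),
      ({p : α × ℝ | g p.1 < p.2}).indicator (fun p => Real.exp (-p.2)) (x, u)) ∂μ := by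
    refine integral_congr_ae ?_
    filter_upwards [hg0] with x hx
    have : (fun u : ℝ => ({p : α × ℝ | g p.1 < p.2}).indicator (fun p => Real.exp (-p.2)) (x, u))
        = (Ioi (g x)).indicator (fun u => Real.exp (-u)) := by
      ext u; simp [indicator]
    rw [this, integral_indicator measurableSet_Ioi, Measure.restrict_restrict measurableSet_Ioi,
      inter_eq_self_of_subset_left (Ioi_subset_Ioi hx), integral_exp_neg_Ioi]
  have hR : ∫ u in Ioi (0:ℝ), Real.exp (-u) * μ.real {x | g x < u} = ∫ u in Ioi (0:ℝ), (∫ x,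
      ({p : α × ℝ | g p.1 < p.2}).indicator (fun p => Real.exp (-p.2)) (x, u) ∂μ) := by
    congr 1
    ext u
    have : (fun x : α => ({p : α × ℝ | g p.1 < p.2}).indicator (fun p => Real.exp (-p.2)) (x, u))
        = ({x | g x < u}).indicator (fun _ => Real.exp (-u)) := by
      ext x; simp [indicator]
    rw [this, integral_indicator_const _ (measurableSet_lt hg measurable_const)]
    simp [mul_comm]
  rw [hL, hR, hswap]

lemma aux_poly (F : ℝ → ℝ) (hmono : Monotone F) (hpos : ∀ s, 0 < s → 0 < F s) (M : ℝ)
    (hM : ∀ s, F s ≤ M) (A s₁ : ℝ) (hs₁ : 0 < s₁)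
    (hA : ∀ s, 0 < s → s < s₁ → F (2 * s) ≤ A * F s) :
    ∃ p : ℕ, ∀ s u : ℝ, 0 < s → 0 ≤ u → F (u * s) ≤ (2 * (1 + u)) ^ p * F s := by
  obtain ⟨p, hp⟩ := pow_unbounded_of_one_lt (max A (M / F s₁)) (one_lt_two (α := ℝ))
  refine ⟨p, ?_⟩
  have hd : ∀ s, 0 < s → F (2 * s) ≤ 2 ^ p * F s := by
    intro s hs
    rcases lt_or_ge s s₁ with h | h
    · exact (hA s hs h).trans (mul_le_mul_of_nonneg_right
        ((le_max_left _ _).trans hp.le) (hpos s hs).le)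
    · have h1 : M / F s₁ ≤ 2 ^ p := (le_max_right _ _).trans hp.le
      rw [div_le_iff₀ (hpos _ hs₁)] at h1
      exact (hM _).trans (h1.trans (mul_le_mul_of_nonneg_left (hmono h) (by positivity)))
  have hk : ∀ (k : ℕ) (s : ℝ), 0 < s → F (2 ^ k * s) ≤ (2 ^ k) ^ p * F s := by
    intro k
    induction k with
    | zero => intro s hs; simp
    | succ k ih =>
      intro s hs
      have h1 := hd (2 ^ k * s) (by positivity)
      have h2 := mul_le_mul_of_nonneg_left (ih s hs) (by positivity : (0:ℝ) ≤ 2 ^ p)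
      calc F (2 ^ (k+1) * s) = F (2 * (2 ^ k * s)) := by ring_nf
        _ ≤ 2 ^ p * ((2 ^ k) ^ p * F s) := h1.trans h2
        _ = (2 ^ (k+1)) ^ p * F s := by rw [pow_succ (2:ℝ) k, mul_pow]; ring
  intro s u hs hu
  obtain ⟨k, hk1, hk2⟩ := exists_nat_pow_near (by linarith : (1:ℝ) ≤ 1 + u) (one_lt_two (α := ℝ))
  calc F (u * s) ≤ F (2 ^ (k+1) * s) :=
        hmono (mul_le_mul_of_nonneg_right (by linarith) hs.le)
    _ ≤ (2 ^ (k+1)) ^ p * F s := hk _ _ hs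
    _ ≤ (2 * (1 + u)) ^ p * F s := by
        refine mul_le_mul_of_nonneg_right (pow_le_pow_left₀ (by positivity) ?_ p) (hpos s hs).le
        rw [pow_succ]; linarith

lemma aux_core_s17 {α : Type*} [MeasurableSpace α] (μ : Measure α) [IsFiniteMeasure μ]
    (h : α → ℝ) (hh : Measurable h) (h01 : ∀ᵐ x ∂μ, 0 < h x ∧ h x ≤ 1)
    (m σ s₀ : ℝ) (φ : ℝ → ℝ) (hm : 0 < m) (hσ : 0 < σ) (hs₀ : 0 < s₀)
    (hφpos : ∀ u : ℝ, 0 < u → 0 < φ u)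
    (hφslow : ∀ c : ℝ, 0 < c → Tendsto (fun u => φ (c * u) / φ u) atTop (nhds 1))
    (hmeas : ∀ s : ℝ, 0 < s → s < s₀ → μ.real {x | h x < s} = s ^ σ * φ (1 / s)) :
    Tendsto (fun T : ℝ => (∫ x, Real.exp (-(T * (h x / (m * (m + h x))))) ∂μ) /
      (T ^ (-σ) * φ T)) atTop (nhds (m ^ (2 * σ) * Real.Gamma (σ + 1))) := by
  set F : ℝ → ℝ := fun s => μ.real {x | h x < s} with hF
  have hmono : Monotone F := fun a b hab => measureReal_mono (fun x (hx : h x < a) => hx.trans_le hab)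
  have hpos : ∀ s, 0 < s → 0 < F s := by
    intro s hs
    have h1 : 0 < min s (s₀ / 2) := by positivity
    have h2 : F (min s (s₀ / 2)) = _ := hmeas _ h1 ((min_le_right _ _).trans_lt (by linarith))
    refine lt_of_lt_of_le ?_ (hmono (min_le_left s (s₀ / 2)))
    rw [h2]
    exact mul_pos (Real.rpow_pos_of_pos h1 _) (hφpos _ (by positivity))
  have hM : ∀ s, F s ≤ μ.real univ := fun s => measureReal_mono (subset_univ _)
  have hFT : ∀ᶠ T : ℝ in atTop, F (1 / T) = T ^ (-σ) * φ T := by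
    filter_upwards [eventually_gt_atTop (1 / s₀), eventually_gt_atTop 0] with T h1 h2
    have h3 : 1 / T < s₀ := by
      rw [div_lt_iff₀ h2]; rw [div_lt_iff₀ hs₀] at h1; linarith
    have h4 : F (1 / T) = _ := hmeas _ (by positivity) h3
    rw [h4, one_div_one_div, one_div, Real.inv_rpow h2.le, Real.rpow_neg h2.le]
  have hratio : ∀ c : ℝ, 0 < c → Tendsto (fun T => F (c / T) / F (1 / T)) atTop (nhds (c ^ σ)) := by
    intro c hc
    have h1 := (hφslow c⁻¹ (by positivity)).const_mul (c ^ σ)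
    rw [mul_one] at h1
    refine h1.congr' ?_
    filter_upwards [hFT, eventually_gt_atTop (c / s₀), eventually_gt_atTop 0] with T h1 h2 h3
    have h4 : c / T < s₀ := by
      rw [div_lt_iff₀ h3]; rw [div_lt_iff₀ hs₀] at h2; linarith
    have h5 : F (c / T) = _ := hmeas _ (by positivity) h4
    rw [h1, h5, Real.div_rpow hc.le h3.le, Real.rpow_neg h3.le]
    have h6 := Real.rpow_pos_of_pos h3 σ
    have h7 := hφpos T h3
    have h8 : 1 / (c / T) = c⁻¹ * T := by field_simp
    rw [h8]
    field_simp
  obtain ⟨p, hp⟩ : ∃ p : ℕ, ∀ s u : ℝ, 0 < s → 0 ≤ u → F (u * s) ≤ (2 * (1 + u)) ^ p * F s := by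
    have h1 : ∀ᶠ T in atTop, F (2 / T) / F (1 / T) < 2 ^ σ + 1 :=
      (hratio 2 two_pos).eventually_lt_const (by linarith)
    obtain ⟨T₀, hT₀⟩ := eventually_atTop.1 h1
    have h2 : 0 < max T₀ 1 := by positivity
    refine aux_poly F hmono hpos _ hM (2 ^ σ + 1) (1 / max T₀ 1) (by positivity) ?_
    intro s hs hs1
    have h3 := hT₀ (1 / s) (by
      rw [lt_div_iff₀ h2] at hs1
      rw [le_div_iff₀ hs]
      nlinarith [le_max_left T₀ 1])
    rw [one_div_one_div, div_lt_iff₀ (hpos _ hs)] at h3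
    have h4 : 2 / (1 / s) = 2 * s := by field_simp
    rw [h4] at h3
    exact h3.le
  set G : ℝ → ℝ → ℝ := fun T u => μ.real {x | T * (h x / (m * (m + h x))) < u} with hG
  have hgm : ∀ T : ℝ, Measurable (fun x => T * (h x / (m * (m + h x)))) := by
    intro T; fun_prop
  -- inclusions
  have hGup : ∀ T u c : ℝ, 0 < T → m ^ 2 * u * T ≤ c * (T - m * u) → m * u < T → G T u ≤ F (c / T) := by
    intro T u c hT h1 h2
    refine ENNReal.toReal_mono (measure_ne_top _ _) (measure_mono_ae ?_)
    filter_upwards [h01] with x hx hx2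
    change T * (h x / (m * (m + h x))) < u at hx2
    change h x < c / T
    have h3 : 0 < m * (m + h x) := by have := hx.1; positivity
    rw [← mul_div_assoc, div_lt_iff₀ h3] at hx2
    rw [lt_div_iff₀ hT]
    have h4 : h x * (T - m * u) < m ^ 2 * u := by nlinarith
    have h5 : h x * T * (T - m * u) < c * (T - m * u) := by
      have := mul_lt_mul_of_pos_right h4 hT
      linarith
    exact lt_of_mul_lt_mul_right h5 (by linarith)
  have hGup2 : ∀ T u : ℝ, 0 < T → G T u ≤ F (m * (m + 1) * u * (1 / T)) := by
    intro T u hT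
    refine ENNReal.toReal_mono (measure_ne_top _ _) (measure_mono_ae ?_)
    filter_upwards [h01] with x hx hx2
    change T * (h x / (m * (m + h x))) < u at hx2
    change h x < m * (m + 1) * u * (1 / T)
    have h0 := hx.1
    have h3 : 0 < m * (m + h x) := by positivity
    rw [← mul_div_assoc, div_lt_iff₀ h3] at hx2
    rw [mul_one_div, lt_div_iff₀ hT]
    have hu : 0 < u := by
      by_contra hu
      have : 0 < T * h x := by positivity
      nlinarith
    have : u * (m * (m + h x)) ≤ u * (m * (m + 1)) := by gcongr; exact hx.2
    linarith
  have hGlo : ∀ T u : ℝ, 0 < T → F (m ^ 2 * u / T) ≤ G T u := by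
    intro T u hT
    refine ENNReal.toReal_mono (measure_ne_top _ _) (measure_mono_ae ?_)
    filter_upwards [h01] with x hx hx2
    change h x < m ^ 2 * u / T at hx2
    change T * (h x / (m * (m + h x))) < u
    have h0 := hx.1
    have h3 : 0 < m * (m + h x) := by positivity
    rw [← mul_div_assoc, div_lt_iff₀ h3]
    rw [lt_div_iff₀ hT] at hx2
    have hu : 0 < u := by
      by_contra hu
      have : 0 < T * h x := by positivity
      have : 0 < m ^ 2 := by positivity
      nlinarith
    have : 0 < u * m * h x := by positivity
    nlinarith
  have hlim : ∀ u : ℝ, 0 < u → Tendsto (fun T => G T u / F (1 / T)) atTop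
      (nhds ((m ^ 2 * u) ^ σ)) := by
    intro u hu
    rw [tendsto_order]
    have hm2 : 0 < m ^ 2 * u := by positivity
    constructor
    · intro a ha
      filter_upwards [(hratio _ hm2).eventually_const_lt ha, eventually_gt_atTop 0] with T h1 h2
      exact h1.trans_le (div_le_div_of_nonneg_right (hGlo T u h2) (hpos _ (by positivity)).le)
    · intro a ha
      obtain ⟨c, hc1, hc2⟩ : ∃ c, m ^ 2 * u < c ∧ c ^ σ < a := by
        have h1 : ∀ᶠ c in nhdsWithin (m ^ 2 * u) (Ioi (m ^ 2 * u)), c ^ σ < a :=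
          ((Real.continuousAt_rpow_const _ _ (Or.inl hm2.ne')).tendsto.eventually_lt_const
            ha).filter_mono nhdsWithin_le_nhds
        obtain ⟨c, h1, h2⟩ := (h1.and self_mem_nhdsWithin).exists
        exact ⟨c, h2, h1⟩
      have hc0 : 0 < c := hm2.trans hc1
      filter_upwards [(hratio c hc0).eventually_lt_const hc2, eventually_gt_atTop 0,
        eventually_gt_atTop (c * (m * u) / (c - m ^ 2 * u))] with T h1 h2 h3
      have hd : 0 < c - m ^ 2 * u := by linarith
      rw [div_lt_iff₀ hd] at h3
      refine lt_of_le_of_lt (div_le_div_of_nonneg_right ?_ (hpos _ (by positivity)).le) h1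
      have h4 : c * (m * u) < c * T := by
        have : 0 < T * (m ^ 2 * u) := by positivity
        nlinarith
      exact hGup T u c h2 (by linarith) (lt_of_mul_lt_mul_left h4 hc0.le)
  have hmain : Tendsto (fun T : ℝ => ∫ u in Ioi (0:ℝ), Real.exp (-u) * (G T u / F (1 / T))) atTop
      (nhds (∫ u in Ioi (0:ℝ), Real.exp (-u) * (m ^ 2 * u) ^ σ)) := by
    refine tendsto_integral_filter_of_dominated_convergence
      (fun u => Real.exp (-u) * (2 * (1 + m * (m + 1) * u)) ^ p) ?_ ?_ ?_ ?_
    · refine Eventually.of_forall fun T => Measurable.aestronglyMeasurable ?_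
      have : Monotone (G T) := fun a b hab =>
        measureReal_mono (fun x (hx : _ < a) => hx.trans_le hab)
      have := this.measurable
      fun_prop
    · filter_upwards [eventually_gt_atTop 0] with T hT
      refine (ae_restrict_iff' measurableSet_Ioi).2 (Eventually.of_forall fun u hu => ?_)
      have hu0 : 0 < u := hu
      have hF1 := hpos (1 / T) (by positivity)
      have hG0 : 0 ≤ G T u := measureReal_nonneg
      rw [Real.norm_of_nonneg (by positivity)]
      refine mul_le_mul_of_nonneg_left ?_ (Real.exp_pos _).le
      rw [div_le_iff₀ hF1]
      exact (hGup2 T u hT).trans (hp _ _ (by positivity) (by positivity))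
    · have hcon : Continuous (fun u : ℝ => Real.exp (-u) * (2 * (1 + m * (m + 1) * u)) ^ p) := by
        fun_prop
      refine integrable_of_isBigO_exp_neg (b := 1 / 2) (by norm_num) hcon.continuousOn ?_
      have h1 : (fun u : ℝ => 2 * (1 + m * (m + 1) * u)) =O[atTop] (fun u : ℝ => u) := by
        refine Asymptotics.IsBigO.of_bound (2 * (1 + m * (m + 1))) ?_
        filter_upwards [eventually_ge_atTop 1] with u hu
        have hu0 : 0 < u := by linarith
        rw [Real.norm_of_nonneg (by positivity), Real.norm_of_nonneg hu0.le]
        nlinarith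
      have h2 := (h1.pow p).trans
        (isLittleO_pow_exp_pos_mul_atTop p (by norm_num : (0:ℝ) < 1 / 2)).isBigO
      have h3 := (Asymptotics.isBigO_refl (fun u : ℝ => Real.exp (-u)) atTop).mul h2
      refine h3.congr_right fun u => ?_
      rw [← Real.exp_add]
      ring_nf
    · refine (ae_restrict_iff' measurableSet_Ioi).2 (Eventually.of_forall fun u hu => ?_)
      exact (hlim u hu).const_mul _
  have hval : ∫ u in Ioi (0:ℝ), Real.exp (-u) * (m ^ 2 * u) ^ σ
      = m ^ (2 * σ) * Real.Gamma (σ + 1) := by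
    rw [Real.Gamma_eq_integral (by linarith), ← integral_const_mul]
    refine setIntegral_congr_fun measurableSet_Ioi fun u hu => ?_
    have hu0 : 0 < u := hu
    rw [Real.mul_rpow (by positivity) hu0.le, Real.rpow_mul hm.le, Real.rpow_two]
    simp only [add_sub_cancel_right]
    ring
  rw [hval] at hmain
  refine hmain.congr' ?_
  filter_upwards [hFT, eventually_gt_atTop 0] with T h1 h2
  rw [aux_layer μ _ (hgm T), ← h1, ← integral_div]
  · congr 1
    ext u
    simp only [hG]
    ring
  · filter_upwards [h01] with x hx
    have := hx.1
    positivity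

/-- Laplace-method asymptotics of `∫₀¹ t^{1/(H(x)+1/2)} dx` (formula (9) of the paper). -/
theorem laplace_asymptotics_of_integral
    (H : ℝ → ℝ) (hcont : ContinuousOn H (Icc 0 1))
    (hrange : ∀ x ∈ Icc (0:ℝ) 1, 0 < H x ∧ H x < 1)
    (Hmin : ℝ) (hHmin : IsLeast (H '' Icc 0 1) Hmin)
    (D : Set ℝ) (hD : D = {x | x ∈ Icc (0:ℝ) 1 ∧ H x - Hmin = 0})
    (σ s₀ : ℝ) (φ : ℝ → ℝ) (hσ : 0 < σ) (hs₀ : 0 < s₀)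
    (hφm : Measurable φ) (hφpos : ∀ u : ℝ, 0 < u → 0 < φ u)
    (hφslow : ∀ c : ℝ, 0 < c → Tendsto (fun u => φ (c * u) / φ u) atTop (nhds 1))
    (hmeas : ∀ s : ℝ, 0 < s → s < s₀ →
      (volume {x | x ∈ Icc (0:ℝ) 1 ∧ 0 < H x - Hmin ∧ H x - Hmin < s}).toReal
        = s ^ σ * φ (1 / s)) :
    Tendsto (fun t : ℝ =>
        ((∫ x in Icc (0:ℝ) 1, t ^ (1 / (H x + 1/2)))
            - t ^ (1 / (Hmin + 1/2)) * (volume D).toReal) /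
          (t ^ (1 / (Hmin + 1/2)) * (Hmin + 1/2) ^ (2*σ) * Real.Gamma (σ + 1) *
            Real.log t ^ (-σ) * φ (Real.log t)))
      atTop (nhds 1) := by
  obtain ⟨⟨x₀, hx₀, hx₀H⟩, hlb⟩ := hHmin
  have hH0 : 0 < Hmin := hx₀H ▸ (hrange x₀ hx₀).1
  have hHlb : ∀ x ∈ Icc (0:ℝ) 1, Hmin ≤ H x := fun x hx => hlb ⟨x, hx, rfl⟩
  set m : ℝ := Hmin + 1/2 with hm
  have hm0 : 0 < m := by linarith
  -- continuous extension
  set h : ℝ → ℝ := fun x => IccExtend (zero_le_one (α := ℝ)) ((Icc (0:ℝ) 1).domRestrict H) x - Hmin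
    with hh
  have hhc : Continuous h :=
    (continuousOn_iff_continuous_domRestrict.1 hcont).Icc_extend'.sub continuous_const
  have hheq : ∀ x ∈ Icc (0:ℝ) 1, h x = H x - Hmin := by
    intro x hx
    simp [hh, IccExtend_of_mem _ _ hx]
  set P : Set ℝ := {x | x ∈ Icc (0:ℝ) 1 ∧ 0 < h x} with hP
  have hPm : MeasurableSet P :=
    measurableSet_Icc.inter (measurableSet_lt measurable_const hhc.measurable)
  have hDeq : D = Icc (0:ℝ) 1 \ P := by
    rw [hD]
    ext x
    simp only [mem_ofPred_eq, Set.mem_sdiff, hP, not_and, not_lt]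
    constructor
    · rintro ⟨h1, h2⟩
      exact ⟨h1, fun _ => by rw [hheq x h1, h2]⟩
    · rintro ⟨h1, h2⟩
      have h3 := h2 h1
      rw [hheq x h1] at h3
      exact ⟨h1, le_antisymm h3 (by linarith [hHlb x h1])⟩
  have hPsub : P ⊆ Icc (0:ℝ) 1 := fun x hx => hx.1
  have hDm : MeasurableSet D := hDeq ▸ measurableSet_Icc.diff hPm
  haveI : IsFiniteMeasure (volume.restrict P) :=
    ⟨by rw [Measure.restrict_apply_univ]
        exact (measure_mono hPsub).trans_lt (by simp)⟩
  have key := aux_core_s17 (volume.restrict P) h hhc.measurable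
    ((ae_restrict_iff' hPm).2 (Eventually.of_forall fun x hx =>
      ⟨hx.2, by rw [hheq x hx.1]; linarith [(hrange x hx.1).2]⟩))
    m σ s₀ φ hm0 hσ hs₀ hφpos hφslow (by
      intro s h1 h2
      rw [← hmeas s h1 h2, measureReal_def,
        Measure.restrict_apply (measurableSet_lt hhc.measurable measurable_const)]
      congr 2
      ext x
      simp only [mem_inter_iff, mem_ofPred_eq, hP]
      constructor
      · rintro ⟨h1, h2, h3⟩
        rw [hheq x h2] at h1 h3
        exact ⟨h2, h3, h1⟩
      · rintro ⟨h1, h2, h3⟩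
        rw [← hheq x h1] at h2 h3
        exact ⟨h3, h1, h2⟩)
  have hC : 0 < m ^ (2 * σ) * Real.Gamma (σ + 1) :=
    mul_pos (Real.rpow_pos_of_pos hm0 _) (Real.Gamma_pos_of_pos (by linarith))
  have key2 := (key.comp Real.tendsto_log_atTop).div_const (m ^ (2 * σ) * Real.Gamma (σ + 1))
  rw [div_self hC.ne'] at key2
  refine key2.congr' ?_
  filter_upwards [eventually_gt_atTop 1] with t ht
  have ht0 : 0 < t := by linarith
  have hlog : 0 < Real.log t := Real.log_pos ht
  have htm : 0 < t ^ (1 / m) := Real.rpow_pos_of_pos ht0 _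
  have hint : IntegrableOn (fun x => t ^ (1 / (H x + 1/2))) (Icc (0:ℝ) 1) := by
    refine ContinuousOn.integrableOn_Icc ?_
    refine ContinuousOn.rpow continuousOn_const ?_ (fun x hx => Or.inl ht0.ne')
    refine continuousOn_const.div (hcont.add continuousOn_const) fun x hx => ?_
    have := (hrange x hx).1
    positivity
  have hsplit : ∫ x in Icc (0:ℝ) 1, t ^ (1 / (H x + 1/2)) =
      t ^ (1 / m) * (volume D).toReal +
      t ^ (1 / m) * ∫ x in P, Real.exp (-(Real.log t * (h x / (m * (m + h x))))) := by
    have hun : Icc (0:ℝ) 1 = D ∪ P := by rw [hDeq, sdiff_union_of_subset hPsub]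
    have hdis : Disjoint D P := by rw [hDeq]; exact disjoint_sdiff_left
    have hDsub : D ⊆ Icc (0:ℝ) 1 := by rw [hDeq]; exact sdiff_subset
    rw [hun, setIntegral_union hdis hPm (hint.mono_set hDsub) (hint.mono_set hPsub)]
    congr 1
    · rw [setIntegral_congr_fun (g := fun _ => t ^ (1 / m)) hDm]
      · rw [setIntegral_const, measureReal_def, smul_eq_mul, mul_comm]
      · intro x hx
        rw [hD] at hx
        have : H x + 1/2 = m := by linarith [hx.2]
        simp only [this]
    · rw [← integral_const_mul]
      refine setIntegral_congr_fun hPm fun x hx => ?_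
      have h1 : H x + 1/2 = m + h x := by rw [hheq x hx.1]; ring
      have h2 : 0 < h x := hx.2
      simp only [h1]
      rw [Real.rpow_def_of_pos ht0, Real.rpow_def_of_pos ht0, ← Real.exp_add]
      congr 1
      field_simp
      ring
  rw [hsplit]
  simp only [Function.comp]
  have hφ0 := hφpos _ hlog
  have hl0 := Real.rpow_pos_of_pos hlog (-σ)
  have hm2 := Real.rpow_pos_of_pos hm0 (2 * σ)
  have hG := Real.Gamma_pos_of_pos (by linarith : 0 < σ + 1)
  rw [add_sub_cancel_left, div_div, mul_assoc (t ^ (1 / m)), mul_assoc (t ^ (1 / m)),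
    mul_assoc (t ^ (1 / m)), mul_div_mul_left _ _ htm.ne']
  congr 1
  ring
end
end
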